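/- arXiv:1905.06291 — 6 statements merged into one kernel-verified Lean document; each statement's English description precedes it below -/
import Mathlib

section
/- Under the hypotheses of the main gradient-feedback stability theorem (plant f with Lyapunov function W and constants γ, ζ; steady-state map h; Φ satisfying the L-bound), suppose in addition that Φ̃(u) := Φ(h(u),u) is twice continuously differentiable and μ-strongly convex (so ∇²Φ̃(u) ⪰ μI for all u, Φ̃ has compact sublevel sets, and a unique global minimizer u* exists). If the metric is taken as the Newton metric Q(u) := ε(∇²Φ̃(u))⁻¹ with 0 < ε < γμ/(ζL), then every complete solution of ẋ = f(x,u), u̇ = −Q(u)H(u)ᵀ∇Φ(x,u) converges to the point (h(u*), u*), the unique global minimizer of min{Φ(x,u) : x = h(u)}. -/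
open Filter Metric Real
open scoped RealInnerProductSpace Topology NNReal

open scoped Gradient

/-!
The reduced cost `φ u = Φ (h u) u` satisfies `∇φ(u) = H(u)ᵀ∇Φ(h u, u)`, so by the L-bound the
Newton feedback `w = -ε (∇²φ)⁻¹ y` uses a gradient `y` whose error is at most `L ‖x - h u‖`. Along
solutions, `W + (ζ / L) (φ - φ*)` decays at rate `(γ - ζ L ε / μ) ‖x - h u‖²`, by completing the
square in `‖w‖`. The Newton metric also gives
`d/dt ½ ‖∇φ‖² = -ε ⟪∇φ, y⟫ ≤ -(ε / 2) ‖∇φ‖² + (ε L² / 2) ‖x - h u‖²`, so adding a small multiple of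
`½ ‖∇φ‖²` produces an energy whose decay rate controls both `‖x - h u‖²` and `‖∇φ‖²`. Since
`φ - φ* ≤ ‖∇φ‖² / (2 μ)`, those two terms in turn bound the energy, which therefore tends to `0`
exponentially.
-/

section Decay

theorem le_mul_exp_of_deriv_le {V V' : ℝ → ℝ} {K : ℝ}
    (hV : ∀ t ≥ 0, HasDerivAt V (V' t) t) (hV' : ∀ t ≥ 0, V' t ≤ K * V t) {t : ℝ} (ht : 0 ≤ t) :
    V t ≤ V 0 * exp (K * t) := by
  have hgronwall := le_gronwallBound_of_liminf_deriv_right_le (f := V) (f' := V') (δ := V 0)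
    (K := K) (ε := 0) (a := 0) (b := t)
    (fun s hs => (hV s hs.1).continuousAt.continuousWithinAt)
    (fun s hs r hr => (hV s hs.1).hasDerivWithinAt.liminf_right_slope_le hr)
    le_rfl (fun s hs => by simpa using hV' s hs.1) t ⟨ht, le_rfl⟩
  simpa only [gronwallBound_ε0, sub_zero] using hgronwall

theorem tendsto_zero_of_deriv_le_neg_mul {V V' : ℝ → ℝ} {c : ℝ} (hc : 0 < c)
    (hnonneg : ∀ t, 0 ≤ V t) (hV : ∀ t ≥ 0, HasDerivAt V (V' t) t)
    (hV' : ∀ t ≥ 0, V' t ≤ -c * V t) : Tendsto V atTop (𝓝 0) := by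
  have hlinear : Tendsto (fun t : ℝ => -c * t) atTop atBot :=
    tendsto_id.const_mul_atTop_of_neg (neg_lt_zero.2 hc)
  have hexp : Tendsto (fun t : ℝ => V 0 * exp (-c * t)) atTop (𝓝 0) := by
    simpa using (tendsto_exp_atBot.comp hlinear).const_mul (V 0)
  refine squeeze_zero' (.of_forall hnonneg) ?_ hexp
  filter_upwards [eventually_ge_atTop 0] with t ht using le_mul_exp_of_deriv_le hV hV' ht

theorem tendsto_zero_of_mul_sq_norm_le {ι E : Type*} [SeminormedAddCommGroup E] {l : Filter ι}
    {y : ι → E} {V : ι → ℝ} {c : ℝ} (hc : 0 < c) (hle : ∀ i, c * ‖y i‖ ^ 2 ≤ V i)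
    (hV : Tendsto V l (𝓝 0)) : Tendsto y l (𝓝 0) := by
  have hsqrt : Tendsto (fun i => √(V i / c)) l (𝓝 0) := by
    simpa using (hV.div_const c).sqrt
  refine squeeze_zero_norm (fun i => le_sqrt_of_sq_le ?_) hsqrt
  rw [le_div_iff₀' hc]
  exact hle i

end Decay

section Minimizer

variable {E : Type*} [NormedAddCommGroup E] [NormedSpace ℝ E] [CompleteSpace E]

theorem exists_forall_le_of_strongConvexOn {φ : E → ℝ} {μ : ℝ} (hμ : 0 < μ)
    (hφ : StrongConvexOn Set.univ μ φ) (hcont : Continuous φ) (hbdd : BddBelow (Set.range φ)) :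
    ∃ us, ∀ v, φ us ≤ φ v := by
  set m := sInf (Set.range φ)
  have hm : ∀ v, m ≤ φ v := fun v => csInf_le hbdd ⟨v, rfl⟩
  -- The midpoint inequality forces almost minimal points together, so `comap φ (𝓝 m)` is Cauchy.
  have hclose : ∀ r > 0, ∀ u v, φ u < m + μ / 8 * r ^ 2 → φ v < m + μ / 8 * r ^ 2 →
      dist u v < r := by
    intro r hr u v hu hv
    have hmid := hφ.2 (Set.mem_univ u) (Set.mem_univ v)
      (by norm_num : (0 : ℝ) ≤ 1 / 2) (by norm_num : (0 : ℝ) ≤ 1 / 2) (by norm_num)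
    simp only [smul_eq_mul] at hmid
    have hsq : μ / 8 * ‖u - v‖ ^ 2 < μ / 8 * r ^ 2 := by
      linarith [hm ((1 / 2 : ℝ) • u + (1 / 2 : ℝ) • v)]
    rw [dist_eq_norm]
    exact lt_of_pow_lt_pow_left₀ 2 hr.le (lt_of_mul_lt_mul_left hsq (by positivity))
  have hcauchy : Cauchy (comap φ (𝓝 m)) := by
    refine Metric.cauchy_iff.2 ⟨?_, fun r hr => ?_⟩
    · refine comap_neBot fun s hs => ?_
      obtain ⟨_, hmem, v, rfl⟩ := mem_closure_iff_nhds.1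
        (csInf_mem_closure (Set.range_nonempty φ) hbdd) s hs
      exact ⟨v, hmem⟩
    · exact ⟨_, preimage_mem_comap (Iio_mem_nhds (lt_add_of_pos_right m (by positivity))),
        fun u hu v hv => hclose r hr u v hu hv⟩
  have := hcauchy.1
  obtain ⟨us, hus⟩ := CompleteSpace.complete hcauchy
  have hval : φ us = m := tendsto_nhds_unique ((hcont.tendsto us).mono_left hus) tendsto_comap
  exact ⟨us, fun v => hval ▸ hm v⟩

end Minimizer

section GradientCalculus

variable {X U : Type*} [NormedAddCommGroup X] [InnerProductSpace ℝ X]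
  [NormedAddCommGroup U] [InnerProductSpace ℝ U] [CompleteSpace U]

theorem contDiff_gradient {φ : U → ℝ} {n : WithTop ℕ∞} (hφ : ContDiff ℝ (n + 1) φ) :
    ContDiff ℝ n (∇ φ) :=
  (InnerProductSpace.toDual ℝ U).symm.contDiff.comp (hφ.fderiv_right le_rfl)

theorem hasDerivAt_comp_inner_gradient {φ : U → ℝ} {u : ℝ → U} {w : U} {t : ℝ}
    (hφ : DifferentiableAt ℝ φ (u t)) (hu : HasDerivAt u w t) :
    HasDerivAt (fun s => φ (u s)) ⟪∇ φ (u t), w⟫ t := by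
  rw [inner_gradient_left]
  exact hφ.hasFDerivAt.comp_hasDerivAt t hu

theorem hasDerivAt_half_sq_norm_gradient {φ : U → ℝ} {u : ℝ → U} {w : U} {t : ℝ}
    (hφ : DifferentiableAt ℝ (∇ φ) (u t)) (hu : HasDerivAt u w t) :
    HasDerivAt (fun s => ‖∇ φ (u s)‖ ^ 2 / 2) ⟪∇ φ (u t), fderiv ℝ (∇ φ) (u t) w⟫ t := by
  have hgrad : HasDerivAt (fun s => ∇ φ (u s)) (fderiv ℝ (∇ φ) (u t) w) t :=
    hφ.hasFDerivAt.comp_hasDerivAt t hu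
  simpa using hgrad.norm_sq.div_const 2

variable [CompleteSpace X]

theorem fderiv_uncurry_apply_eq_inner_gradient {F : X → U → ℝ} {x : X} {u : U}
    (hF : DifferentiableAt ℝ (Function.uncurry F) (x, u)) (a : X) (b : U) :
    fderiv ℝ (Function.uncurry F) (x, u) (a, b) =
      ⟪∇ (fun y => F y u) x, a⟫ + ⟪∇ (fun v => F x v) u, b⟫ := by
  have hfst : fderiv ℝ (fun y => F y u) x = (fderiv ℝ (Function.uncurry F) (x, u)).comp
      (ContinuousLinearMap.inl ℝ X U) :=
    (hF.hasFDerivAt.comp x (f := fun y => (y, u)) (hasFDerivAt_prodMk_left x u)).fderiv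
  have hsnd : fderiv ℝ (fun v => F x v) u = (fderiv ℝ (Function.uncurry F) (x, u)).comp
      (ContinuousLinearMap.inr ℝ X U) :=
    (hF.hasFDerivAt.comp u (f := fun v => (x, v)) (hasFDerivAt_prodMk_right x u)).fderiv
  simp [inner_gradient_left, hfst, hsnd, ← map_add]

theorem hasDerivAt_uncurry_comp_inner_gradient {F : X → U → ℝ} {x : ℝ → X} {u : ℝ → U} {a : X}
    {b : U} {t : ℝ} (hF : DifferentiableAt ℝ (Function.uncurry F) (x t, u t))
    (hx : HasDerivAt x a t) (hu : HasDerivAt u b t) :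
    HasDerivAt (fun s => F (x s) (u s))
      (⟪∇ (fun y => F y (u t)) (x t), a⟫ + ⟪∇ (fun v => F (x t) v) (u t), b⟫) t := by
  rw [← fderiv_uncurry_apply_eq_inner_gradient hF]
  exact hF.hasFDerivAt.comp_hasDerivAt (f := fun s => (x s, u s)) t (hx.prodMk hu)

/-- The feedback signal `H(u)ᵀ∇Φ(x, u) = Dh(u)ᵀ∇ₓΦ(x, u) + ∇ᵤΦ(x, u)`, which becomes the gradient of
the reduced cost `u ↦ Φ (h u) u` when the plant is at steady state. -/
noncomputable def feedbackGradient (h : U → X) (Φ : X → U → ℝ) (x : X) (u : U) : U :=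
  ContinuousLinearMap.adjoint (fderiv ℝ h u) (∇ (fun y => Φ y u) x) + ∇ (fun v => Φ x v) u

theorem gradient_reduced_eq_feedbackGradient {h : U → X} {Φ : X → U → ℝ} {u : U}
    (hΦ : DifferentiableAt ℝ (Function.uncurry Φ) (h u, u)) (hh : DifferentiableAt ℝ h u) :
    ∇ (fun v => Φ (h v) v) u = feedbackGradient h Φ (h u) u := by
  refine ext_inner_right ℝ fun w => ?_
  have hchain : fderiv ℝ (fun v => Φ (h v) v) u =
      (fderiv ℝ (Function.uncurry Φ) (h u, u)).comp
        ((fderiv ℝ h u).prod (ContinuousLinearMap.id ℝ U)) :=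
    (hΦ.hasFDerivAt.comp u (f := fun v => (h v, v))
      (hh.hasFDerivAt.prodMk (hasFDerivAt_id u))).fderiv
  calc ⟪∇ (fun v => Φ (h v) v) u, w⟫
      = fderiv ℝ (Function.uncurry Φ) (h u, u) (fderiv ℝ h u w, w) := by
        simp [inner_gradient_left, hchain]
    _ = ⟪feedbackGradient h Φ (h u) u, w⟫ := by
        rw [fderiv_uncurry_apply_eq_inner_gradient hΦ, feedbackGradient, inner_add_left,
          ContinuousLinearMap.adjoint_inner_left]

end GradientCalculus

section StrongConvexity

variable {U : Type*} [NormedAddCommGroup U] [InnerProductSpace ℝ U] {φ : U → ℝ} {μ : ℝ}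

theorem neg_sq_norm_div_le_inner_add (hμ : 0 < μ) (g d : U) :
    -(‖g‖ ^ 2 / (2 * μ)) ≤ ⟪g, d⟫ + μ / 2 * ‖d‖ ^ 2 := by
  have hsq : 0 ≤ ‖g + μ • d‖ ^ 2 / (2 * μ) := by positivity
  have hexpand : ‖g + μ • d‖ ^ 2 / (2 * μ) = ‖g‖ ^ 2 / (2 * μ) + ⟪g, d⟫ + μ / 2 * ‖d‖ ^ 2 := by
    rw [norm_add_sq_real, real_inner_smul_right, norm_smul, mul_pow, norm_eq_abs, sq_abs]
    field_simp
  linarith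

variable [CompleteSpace U]

/-- Strong convexity in second-order form: `φ` is twice differentiable and `∇²φ ⪰ μ I`, where the
Hessian is encoded as the derivative of the gradient. -/
structure HasHessianLowerBound (φ : U → ℝ) (μ : ℝ) : Prop where
  differentiable : Differentiable ℝ φ
  differentiable_gradient : Differentiable ℝ (∇ φ)
  le_inner_hessian : ∀ u v, μ * ‖v‖ ^ 2 ≤ ⟪fderiv ℝ (∇ φ) u v, v⟫

namespace HasHessianLowerBound

theorem mul_sq_norm_le_inner_gradient_sub (hφ : HasHessianLowerBound φ μ) (u d : U) :
    μ * ‖d‖ ^ 2 ≤ ⟪∇ φ (u + d) - ∇ φ u, d⟫ := by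
  have hline (s : ℝ) : HasDerivAt (fun s : ℝ => ⟪∇ φ (u + s • d), d⟫)
      ⟪fderiv ℝ (∇ φ) (u + s • d) d, d⟫ s := by
    have hgrad : HasDerivAt (fun s : ℝ => ∇ φ (u + s • d)) (fderiv ℝ (∇ φ) (u + s • d) d) s :=
      (hφ.differentiable_gradient _).hasFDerivAt.comp_hasDerivAt s
        (by simpa using ((hasDerivAt_id s).smul_const d).const_add u)
    simpa using hgrad.inner ℝ (hasDerivAt_const s d)
  have hmean := mul_sub_le_image_sub_of_le_deriv (fun s => (hline s).differentiableAt)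
    (fun s => by rw [(hline s).deriv]; exact hφ.le_inner_hessian (u + s • d) d) zero_le_one
  simpa [inner_sub_left] using hmean

theorem add_inner_gradient_add_le (hφ : HasHessianLowerBound φ μ) (u v : U) :
    φ u + ⟪∇ φ u, v - u⟫ + μ / 2 * ‖v - u‖ ^ 2 ≤ φ v := by
  set d := v - u
  have hline (s : ℝ) : HasDerivAt
      (fun s : ℝ => φ (u + s • d) - s * ⟪∇ φ u, d⟫ - s ^ 2 * (μ / 2 * ‖d‖ ^ 2))
      (⟪∇ φ (u + s • d) - ∇ φ u, d⟫ - s * (μ * ‖d‖ ^ 2)) s := by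
    have hcomp := hasDerivAt_comp_inner_gradient (u := fun s : ℝ => u + s • d) (hφ.differentiable _)
      (by simpa using ((hasDerivAt_id s).smul_const d).const_add u)
    refine ((hcomp.sub ((hasDerivAt_id s).mul_const ⟪∇ φ u, d⟫)).sub
      ((hasDerivAt_pow 2 s).mul_const (μ / 2 * ‖d‖ ^ 2))).congr_deriv ?_
    rw [inner_sub_left]
    push_cast
    ring
  have hderiv : ∀ s > 0, s * (μ * ‖d‖ ^ 2) ≤ ⟪∇ φ (u + s • d) - ∇ φ u, d⟫ := by
    intro s hs
    have hmono := hφ.mul_sq_norm_le_inner_gradient_sub u (s • d)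
    rw [real_inner_smul_right, norm_smul, mul_pow, norm_eq_abs, sq_abs] at hmono
    exact le_of_mul_le_mul_left (by linarith) hs
  have hmonotone : MonotoneOn
      (fun s : ℝ => φ (u + s • d) - s * ⟪∇ φ u, d⟫ - s ^ 2 * (μ / 2 * ‖d‖ ^ 2)) (Set.Ici 0) := by
    refine monotoneOn_of_deriv_nonneg (convex_Ici 0)
      (fun s _ => (hline s).continuousAt.continuousWithinAt)
      (fun s _ => (hline s).differentiableAt.differentiableWithinAt) fun s hs => ?_
    rw [interior_Ici, Set.mem_Ioi] at hs
    rw [(hline s).deriv]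
    exact sub_nonneg.2 (hderiv s hs)
  have hends := hmonotone Set.self_mem_Ici (Set.mem_Ici.2 zero_le_one) zero_le_one
  simp only [zero_smul, add_zero, zero_mul, one_smul, one_pow, one_mul, sub_zero, ne_eq,
    OfNat.ofNat_ne_zero, not_false_eq_true, zero_pow, d, add_sub_cancel] at hends
  linarith

theorem strongConvexOn (hφ : HasHessianLowerBound φ μ) : StrongConvexOn Set.univ μ φ := by
  refine ⟨convex_univ, fun u _ v _ a b ha hb hab => ?_⟩
  obtain rfl : b = 1 - a := by linarith
  set z := a • u + (1 - a) • v
  have hu : u - z = (1 - a) • (u - v) := by module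
  have hv : v - z = -a • (u - v) := by module
  have hfu := hφ.add_inner_gradient_add_le z u
  have hfv := hφ.add_inner_gradient_add_le z v
  rw [hu, real_inner_smul_right, norm_smul, mul_pow, norm_eq_abs, sq_abs] at hfu
  rw [hv, real_inner_smul_right, norm_smul, mul_pow, norm_eq_abs, sq_abs] at hfv
  simp only [smul_eq_mul]
  linear_combination a * hfu + (1 - a) * hfv

theorem sub_sq_norm_gradient_div_le (hφ : HasHessianLowerBound φ μ) (hμ : 0 < μ) (u v : U) :
    φ u - ‖∇ φ u‖ ^ 2 / (2 * μ) ≤ φ v := by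
  linarith [hφ.add_inner_gradient_add_le u v, neg_sq_norm_div_le_inner_add hμ (∇ φ u) (v - u)]

theorem exists_forall_le (hφ : HasHessianLowerBound φ μ) (hμ : 0 < μ) : ∃ us, ∀ v, φ us ≤ φ v :=
  exists_forall_le_of_strongConvexOn hμ hφ.strongConvexOn hφ.differentiable.continuous
    ⟨_, Set.forall_mem_range.2 (hφ.sub_sq_norm_gradient_div_le hμ 0)⟩

theorem eq_of_forall_le (hφ : HasHessianLowerBound φ μ) (hμ : 0 < μ) {u v : U}
    (hu : ∀ w, φ u ≤ φ w) (hv : ∀ w, φ v ≤ φ w) : u = v :=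
  (hφ.strongConvexOn.strictConvexOn hμ).eq_of_isMinOn (fun w _ => hu w) (fun w _ => hv w)
    (Set.mem_univ u) (Set.mem_univ v)

theorem mul_sq_norm_sub_le_of_forall_le (hφ : HasHessianLowerBound φ μ) {us : U}
    (hus : ∀ v, φ us ≤ φ v) (v : U) : μ / 2 * ‖v - us‖ ^ 2 ≤ φ v - φ us := by
  have hcrit : ∇ φ us = 0 := by
    have hmin : IsLocalMin φ us := .of_forall hus
    rw [gradient, hmin.fderiv_eq_zero, map_zero]
  have hfirst := hφ.add_inner_gradient_add_le us v
  rw [hcrit, inner_zero_left] at hfirst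
  linarith

end HasHessianLowerBound

end StrongConvexity

section NewtonLoop

variable {X U : Type*} [NormedAddCommGroup X] [InnerProductSpace ℝ X]
  [NormedAddCommGroup U] [InnerProductSpace ℝ U]

theorem inner_le_of_inexact_newton {A : U → U} {g y w : U} {μ ε : ℝ} (hε : 0 < ε)
    (hA : μ * ‖w‖ ^ 2 ≤ ⟪A w, w⟫) (hw : A w = -(ε • y)) :
    ⟪g, w⟫ ≤ -(μ / ε) * ‖w‖ ^ 2 + ‖y - g‖ * ‖w‖ := by
  have hexact : ⟪y, w⟫ ≤ -(μ / ε) * ‖w‖ ^ 2 := by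
    rw [hw, inner_neg_left, real_inner_smul_left] at hA
    rw [neg_mul, le_neg, div_mul_eq_mul_div, div_le_iff₀ hε]
    linarith
  have herror : -⟪y - g, w⟫ ≤ ‖y - g‖ * ‖w‖ :=
    (neg_le_abs _).trans (abs_real_inner_le_norm _ _)
  rw [inner_sub_left] at herror
  linarith

theorem neg_inner_le_half_sq_norm_sub (g y : U) :
    -⟪g, y⟫ ≤ -(‖g‖ ^ 2 / 2) + ‖y - g‖ ^ 2 / 2 := by
  have hexpand := norm_sub_sq_real y g
  rw [real_inner_comm] at hexpand
  linarith [sq_nonneg ‖y‖]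

variable [CompleteSpace U]

/-- The plant `ẋ = f (x, u)` in loop with the Newton flow `∇²φ(u) u̇ = -ε y`, where the measurement
`y` of `∇φ(u)` has an error of at most `L` times the distance of the plant from steady state.
Here `w` is the velocity of `u`. -/
structure IsInexactNewtonLoop (f : X → U → X) (h : U → X) (φ : U → ℝ) (ε L : ℝ)
    (x : ℝ → X) (u w y : ℝ → U) : Prop where
  hasDerivAt_state : ∀ t ≥ 0, HasDerivAt x (f (x t) (u t)) t
  hasDerivAt_input : ∀ t ≥ 0, HasDerivAt u (w t) t
  hessian_velocity : ∀ t ≥ 0, fderiv ℝ (∇ φ) (u t) (w t) = -(ε • y t)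
  norm_measurement_sub_le : ∀ t ≥ 0, ‖y t - ∇ φ (u t)‖ ≤ L * ‖x t - h (u t)‖

theorem IsInexactNewtonLoop.neg_inner_gradient_measurement_le {f : X → U → X} {h : U → X}
    {φ : U → ℝ} {ε L : ℝ} {x : ℝ → X} {u w y : ℝ → U} {t : ℝ}
    (hloop : IsInexactNewtonLoop f h φ ε L x u w y) (ht : 0 ≤ t) :
    -⟪∇ φ (u t), y t⟫ ≤ -(‖∇ φ (u t)‖ ^ 2 / 2) + (L * ‖x t - h (u t)‖) ^ 2 / 2 :=
  (neg_inner_le_half_sq_norm_sub _ _).trans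
    (by gcongr; exact hloop.norm_measurement_sub_le t ht)

variable [CompleteSpace X]

/-- `W` is a Lyapunov function with constants `α, β, γ, ζ` for the plant `ẋ = f (x, u)` with
steady-state map `h`. -/
structure IsPlantLyapunov (f : X → U → X) (h : U → X) (W : X → U → ℝ) (α β γ ζ : ℝ) : Prop where
  steady : ∀ u, f (h u) u = 0
  differentiable : Differentiable ℝ (Function.uncurry W)
  lower : ∀ x u, α * ‖x - h u‖ ^ 2 ≤ W x u
  upper : ∀ x u, W x u ≤ β * ‖x - h u‖ ^ 2
  decay : ∀ x u, ⟪∇ (fun y => W y u) x, f x u⟫ ≤ -γ * ‖x - h u‖ ^ 2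
  norm_gradient_input_le : ∀ x u, ‖∇ (fun v => W x v) u‖ ≤ ζ * ‖x - h u‖

/-- The composite energy `W + a (φ - m) + b ‖∇φ‖² / 2` of the loop, with the cost measured from the
level `m`. -/
noncomputable def loopEnergy (W : X → U → ℝ) (φ : U → ℝ) (a b m : ℝ) (x : X) (u : U) : ℝ :=
  W x u + a * (φ u - m) + b * (‖∇ φ u‖ ^ 2 / 2)

/-- The rate at which `W + (ζ / L) φ` decays per unit of `‖x - h u‖²`; it is positive exactly when
`ε < γ μ / (ζ L)`. -/
noncomputable def decayMargin (γ ζ L μ ε : ℝ) : ℝ := γ - ζ * L * ε / μ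

theorem decayMargin_pos {γ ζ L μ ε : ℝ} (hζ : 0 < ζ) (hL : 0 < L) (hμ : 0 < μ)
    (hε : ε < γ * μ / (ζ * L)) : 0 < decayMargin γ ζ L μ ε := by
  rw [lt_div_iff₀ (by positivity)] at hε
  rw [decayMargin, sub_pos, div_lt_iff₀ hμ]
  linarith

variable {f : X → U → X} {h : U → X} {W : X → U → ℝ} {φ : U → ℝ} {α β γ ζ L μ ε a b m : ℝ}

theorem IsPlantLyapunov.inner_add_inner_le (hW : IsPlantLyapunov f h W α β γ ζ) (x : X) (u w : U) :
    ⟪∇ (fun y => W y u) x, f x u⟫ + ⟪∇ (fun v => W x v) u, w⟫ ≤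
      -γ * ‖x - h u‖ ^ 2 + ζ * ‖x - h u‖ * ‖w‖ := by
  have hinput : ⟪∇ (fun v => W x v) u, w⟫ ≤ ζ * ‖x - h u‖ * ‖w‖ :=
    (real_inner_le_norm _ _).trans (by gcongr; exact hW.norm_gradient_input_le x u)
  linarith [hW.decay x u]

theorem mul_sq_norm_sub_le_loopEnergy (hW : IsPlantLyapunov f h W α β γ ζ) (ha : 0 ≤ a)
    (hb : 0 ≤ b) (hm : ∀ v, m ≤ φ v) (x : X) (u : U) :
    α * ‖x - h u‖ ^ 2 ≤ loopEnergy W φ a b m x u := by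
  have hcost : 0 ≤ a * (φ u - m) := mul_nonneg ha (sub_nonneg.2 (hm u))
  have hgrad : 0 ≤ b * (‖∇ φ u‖ ^ 2 / 2) := by positivity
  unfold loopEnergy
  linarith [hW.lower x u]

theorem mul_sub_le_loopEnergy (hW : IsPlantLyapunov f h W α β γ ζ) (hα : 0 ≤ α) (hb : 0 ≤ b)
    (x : X) (u : U) : a * (φ u - m) ≤ loopEnergy W φ a b m x u := by
  have hplant : 0 ≤ α * ‖x - h u‖ ^ 2 := by positivity
  have hgrad : 0 ≤ b * (‖∇ φ u‖ ^ 2 / 2) := by positivity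
  unfold loopEnergy
  linarith [hW.lower x u]

theorem loopEnergy_le (hW : IsPlantLyapunov f h W α β γ ζ) (hφ : HasHessianLowerBound φ μ)
    (hμ : 0 < μ) (ha : 0 ≤ a) {us : U} (x : X) (u : U) :
    loopEnergy W φ a b (φ us) x u ≤ β * ‖x - h u‖ ^ 2 + (a / μ + b) * (‖∇ φ u‖ ^ 2 / 2) := by
  have hcost : a * (φ u - φ us) ≤ a * (‖∇ φ u‖ ^ 2 / (2 * μ)) :=
    mul_le_mul_of_nonneg_left (by linarith [hφ.sub_sq_norm_gradient_div_le hμ u us]) ha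
  calc loopEnergy W φ a b (φ us) x u
      ≤ β * ‖x - h u‖ ^ 2 + a * (‖∇ φ u‖ ^ 2 / (2 * μ)) + b * (‖∇ φ u‖ ^ 2 / 2) := by
        unfold loopEnergy
        linarith [hW.upper x u]
    _ = β * ‖x - h u‖ ^ 2 + (a / μ + b) * (‖∇ φ u‖ ^ 2 / 2) := by
        field_simp
        ring

namespace IsInexactNewtonLoop

variable {x : ℝ → X} {u w y : ℝ → U} {t : ℝ}

theorem hasDerivAt_loopEnergy (hloop : IsInexactNewtonLoop f h φ ε L x u w y)
    (hW : IsPlantLyapunov f h W α β γ ζ) (hφ : HasHessianLowerBound φ μ) (ht : 0 ≤ t) :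
    HasDerivAt (fun s => loopEnergy W φ a b m (x s) (u s))
      (⟪∇ (fun z => W z (u t)) (x t), f (x t) (u t)⟫ + ⟪∇ (fun v => W (x t) v) (u t), w t⟫
        + a * ⟪∇ φ (u t), w t⟫ + b * (ε * -⟪∇ φ (u t), y t⟫)) t := by
  have hu := hloop.hasDerivAt_input t ht
  have hplant := hasDerivAt_uncurry_comp_inner_gradient (hW.differentiable (x t, u t))
    (hloop.hasDerivAt_state t ht) hu
  have hcost := hasDerivAt_comp_inner_gradient (hφ.differentiable (u t)) hu
  have hgrad := hasDerivAt_half_sq_norm_gradient (hφ.differentiable_gradient (u t)) hu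
  rw [hloop.hessian_velocity t ht, inner_neg_right, real_inner_smul_right, ← mul_neg] at hgrad
  exact (hplant.add ((hcost.sub_const m).const_mul a)).add (hgrad.const_mul b)

theorem plant_add_cost_rate_le (hloop : IsInexactNewtonLoop f h φ ε L x u w y)
    (hW : IsPlantLyapunov f h W α β γ ζ) (hφ : HasHessianLowerBound φ μ)
    (hζ : 0 < ζ) (hL : 0 < L) (hμ : 0 < μ) (hε : 0 < ε) (ht : 0 ≤ t) :
    ⟪∇ (fun z => W z (u t)) (x t), f (x t) (u t)⟫ + ⟪∇ (fun v => W (x t) v) (u t), w t⟫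
        + ζ / L * ⟪∇ φ (u t), w t⟫ ≤ -decayMargin γ ζ L μ ε * ‖x t - h (u t)‖ ^ 2 := by
  set e := ‖x t - h (u t)‖
  have hplant := hW.inner_add_inner_le (x t) (u t) (w t)
  have hcost : ⟪∇ φ (u t), w t⟫ ≤ -(μ / ε) * ‖w t‖ ^ 2 + L * e * ‖w t‖ :=
    (inner_le_of_inexact_newton hε (hφ.le_inner_hessian (u t) (w t))
      (hloop.hessian_velocity t ht)).trans (by gcongr; exact hloop.norm_measurement_sub_le t ht)
  have hsq : 0 ≤ ζ * μ / (L * ε) * (‖w t‖ - L * ε / μ * e) ^ 2 := by positivity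
  calc _ ≤ -γ * e ^ 2 + ζ * e * ‖w t‖ + ζ / L * (-(μ / ε) * ‖w t‖ ^ 2 + L * e * ‖w t‖) := by
        gcongr
    _ = -decayMargin γ ζ L μ ε * e ^ 2
          - ζ * μ / (L * ε) * (‖w t‖ - L * ε / μ * e) ^ 2 := by
        unfold decayMargin
        field_simp
        ring
    _ ≤ -decayMargin γ ζ L μ ε * e ^ 2 := sub_le_self _ hsq

theorem loopEnergy_rate_le (hloop : IsInexactNewtonLoop f h φ ε L x u w y)
    (hW : IsPlantLyapunov f h W α β γ ζ) (hφ : HasHessianLowerBound φ μ)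
    (hζ : 0 < ζ) (hL : 0 < L) (hμ : 0 < μ) (hε : 0 < ε) (hb : 0 ≤ b)
    (hbL : b * (ε * L ^ 2) = decayMargin γ ζ L μ ε) (ht : 0 ≤ t) :
    ⟪∇ (fun z => W z (u t)) (x t), f (x t) (u t)⟫ + ⟪∇ (fun v => W (x t) v) (u t), w t⟫
        + ζ / L * ⟪∇ φ (u t), w t⟫ + b * (ε * -⟪∇ φ (u t), y t⟫) ≤
      -(decayMargin γ ζ L μ ε / 2 * ‖x t - h (u t)‖ ^ 2 + b * ε * (‖∇ φ (u t)‖ ^ 2 / 2)) := by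
  have hslow := hloop.plant_add_cost_rate_le hW hφ hζ hL hμ hε ht
  have hgrad := mul_le_mul_of_nonneg_left (hloop.neg_inner_gradient_measurement_le ht)
    (mul_nonneg hb hε.le)
  rw [← hbL] at hslow ⊢
  linarith

theorem tendsto_loopEnergy (hloop : IsInexactNewtonLoop f h φ ε L x u w y)
    (hW : IsPlantLyapunov f h W α β γ ζ) (hφ : HasHessianLowerBound φ μ)
    (hα : 0 ≤ α) (hβ : 0 < β) (hζ : 0 < ζ) (hL : 0 < L) (hμ : 0 < μ) (hε : 0 < ε) (hb : 0 < b)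
    (hbL : b * (ε * L ^ 2) = decayMargin γ ζ L μ ε) {us : U} (hus : ∀ v, φ us ≤ φ v) :
    Tendsto (fun t => loopEnergy W φ (ζ / L) b (φ us) (x t) (u t)) atTop (𝓝 0) := by
  set σ := decayMargin γ ζ L μ ε
  have hσ : 0 < σ := hbL ▸ (by positivity)
  have hK : 0 < ζ / L / μ + b := by positivity
  set c := min (σ / 2 / β) (b * ε / (ζ / L / μ + b))
  have hc : 0 < c := lt_min (by positivity) (by positivity)
  have hcβ : c * β ≤ σ / 2 := (le_div_iff₀ hβ).1 (min_le_left _ _)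
  have hcK : c * (ζ / L / μ + b) ≤ b * ε := (le_div_iff₀ hK).1 (min_le_right _ _)
  refine tendsto_zero_of_deriv_le_neg_mul hc (fun t => ?_)
    (fun t ht => hloop.hasDerivAt_loopEnergy hW hφ ht) (fun t ht => ?_)
  · exact (by positivity : 0 ≤ α * ‖x t - h (u t)‖ ^ 2).trans
      (mul_sq_norm_sub_le_loopEnergy hW (by positivity) hb.le hus _ _)
  · refine (hloop.loopEnergy_rate_le hW hφ hζ hL hμ hε hb.le hbL ht).trans ?_
    rw [neg_mul, neg_le_neg_iff]
    calc c * loopEnergy W φ (ζ / L) b (φ us) (x t) (u t)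
        ≤ c * (β * ‖x t - h (u t)‖ ^ 2 + (ζ / L / μ + b) * (‖∇ φ (u t)‖ ^ 2 / 2)) := by
          gcongr
          exact loopEnergy_le hW hφ hμ (by positivity) _ _
      _ = c * β * ‖x t - h (u t)‖ ^ 2 + c * (ζ / L / μ + b) * (‖∇ φ (u t)‖ ^ 2 / 2) := by ring
      _ ≤ σ / 2 * ‖x t - h (u t)‖ ^ 2 + b * ε * (‖∇ φ (u t)‖ ^ 2 / 2) := by gcongr

theorem tendsto_of_forall_le (hloop : IsInexactNewtonLoop f h φ ε L x u w y)
    (hW : IsPlantLyapunov f h W α β γ ζ) (hφ : HasHessianLowerBound φ μ)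
    (hα : 0 < α) (hβ : 0 < β) (hζ : 0 < ζ) (hL : 0 < L) (hμ : 0 < μ) (hε : 0 < ε)
    (hεbound : ε < γ * μ / (ζ * L)) {us : U} (hus : ∀ v, φ us ≤ φ v) (hh : ContinuousAt h us) :
    Tendsto (fun t => (x t, u t)) atTop (𝓝 (h us, us)) := by
  obtain ⟨b, hb, hbL⟩ : ∃ b > 0, b * (ε * L ^ 2) = decayMargin γ ζ L μ ε :=
    ⟨decayMargin γ ζ L μ ε / (ε * L ^ 2),
      div_pos (decayMargin_pos hζ hL hμ hεbound) (by positivity), div_mul_cancel₀ _ (by positivity)⟩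
  have henergy := hloop.tendsto_loopEnergy hW hφ hα.le hβ hζ hL hμ hε hb hbL hus
  have herror : Tendsto (fun t => x t - h (u t)) atTop (𝓝 0) :=
    tendsto_zero_of_mul_sq_norm_le hα
      (fun t => mul_sq_norm_sub_le_loopEnergy hW (by positivity) hb.le hus _ _) henergy
  have hinput : Tendsto (fun t => u t - us) atTop (𝓝 0) := by
    refine tendsto_zero_of_mul_sq_norm_le (c := ζ / L * (μ / 2)) (by positivity)
      (fun t => ?_) henergy
    rw [mul_assoc]
    exact (mul_le_mul_of_nonneg_left (hφ.mul_sq_norm_sub_le_of_forall_le hus (u t))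
      (by positivity)).trans (mul_sub_le_loopEnergy hW hα.le hb.le _ _)
  have hu : Tendsto u atTop (𝓝 us) := tendsto_sub_nhds_zero_iff.1 hinput
  have hx : Tendsto x atTop (𝓝 (h us)) := by
    simpa using herror.add (hh.tendsto.comp hu)
  exact hx.prodMk_nhds hu

end IsInexactNewtonLoop

end NewtonLoop

theorem isInexactNewtonLoop_of_feedbackGradient {X U : Type*}
    [NormedAddCommGroup X] [InnerProductSpace ℝ X] [CompleteSpace X]
    [NormedAddCommGroup U] [InnerProductSpace ℝ U] [CompleteSpace U]
    {f : X → U → X} {h : U → X} {Φ : X → U → ℝ} {Q : U → U →L[ℝ] U} {L ε : ℝ}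
    (hh : Differentiable ℝ h) (hΦ : Differentiable ℝ (Function.uncurry Φ))
    (hL : ∀ x x' u, ‖feedbackGradient h Φ x' u - feedbackGradient h Φ x u‖ ≤ L * ‖x' - x‖)
    (hQ : ∀ u v, fderiv ℝ (∇ fun w => Φ (h w) w) u (Q u v) = ε • v) {x : ℝ → X} {u : ℝ → U}
    (hx : ∀ t ≥ 0, HasDerivAt x (f (x t) (u t)) t)
    (hu : ∀ t ≥ 0, HasDerivAt u (-(Q (u t) (feedbackGradient h Φ (x t) (u t)))) t) :
    IsInexactNewtonLoop f h (fun v => Φ (h v) v) ε L x u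
      (fun t => -(Q (u t) (feedbackGradient h Φ (x t) (u t))))
      (fun t => feedbackGradient h Φ (x t) (u t)) where
  hasDerivAt_state := hx
  hasDerivAt_input := hu
  hessian_velocity t _ := by rw [map_neg, hQ]
  norm_measurement_sub_le t _ := by
    rw [gradient_reduced_eq_feedbackGradient (hΦ _) (hh _)]
    exact hL _ _ _

theorem stmt6_general {X U : Type*}
    [NormedAddCommGroup X] [InnerProductSpace ℝ X] [CompleteSpace X]
    [NormedAddCommGroup U] [InnerProductSpace ℝ U] [CompleteSpace U]
    {f : X → U → X} {h : U → X} {W Φ : X → U → ℝ} {Q : U → U →L[ℝ] U} {α β γ ζ L μ ε : ℝ}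
    (hα : 0 < α) (hβ : 0 < β) (hζ : 0 < ζ) (hL : 0 < L) (hμ : 0 < μ)
    (hh : Differentiable ℝ h) (hW : IsPlantLyapunov f h W α β γ ζ)
    (hΦ : Differentiable ℝ (Function.uncurry Φ))
    (hLbound : ∀ x x' u, ‖feedbackGradient h Φ x' u - feedbackGradient h Φ x u‖ ≤ L * ‖x' - x‖)
    (hφ : HasHessianLowerBound (fun v => Φ (h v) v) μ)
    (hQ : ∀ u v, fderiv ℝ (∇ fun w => Φ (h w) w) u (Q u v) = ε • v)
    (hε : 0 < ε) (hεbound : ε < γ * μ / (ζ * L)) {x : ℝ → X} {u : ℝ → U}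
    (hx : ∀ t ≥ 0, HasDerivAt x (f (x t) (u t)) t)
    (hu : ∀ t ≥ 0, HasDerivAt u (-(Q (u t) (feedbackGradient h Φ (x t) (u t)))) t) :
    ∃ us, (∀ v, Φ (h us) us ≤ Φ (h v) v) ∧ (∀ v, (∀ w, Φ (h v) v ≤ Φ (h w) w) → v = us) ∧
      Tendsto (fun t => (x t, u t)) atTop (𝓝 (h us, us)) := by
  obtain ⟨us, hus⟩ := hφ.exists_forall_le hμ
  have hloop := isInexactNewtonLoop_of_feedbackGradient hh hΦ hLbound hQ hx hu
  exact ⟨us, hus, fun v hv => hφ.eq_of_forall_le hμ hv hus,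
    hloop.tendsto_of_forall_le hW hφ hα hβ hζ hL hμ hε hεbound hus (hh us).continuousAt⟩

/-- Newton gradient flow in closed loop: with the Newton metric
`Q(u) = ε(∇²Φ̃(u))⁻¹` and `0 < ε < γμ/(ζL)`, the interconnection converges to
the unique global minimizer of `min {Φ(x,u) : x = h(u)}`. -/
theorem stmt6 {n p : ℕ}
    (f : EuclideanSpace ℝ (Fin n) → EuclideanSpace ℝ (Fin p) → EuclideanSpace ℝ (Fin n))
    (h : EuclideanSpace ℝ (Fin p) → EuclideanSpace ℝ (Fin n))
    (W : EuclideanSpace ℝ (Fin n) → EuclideanSpace ℝ (Fin p) → ℝ)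
    (Φ : EuclideanSpace ℝ (Fin n) → EuclideanSpace ℝ (Fin p) → ℝ)
    (Q : EuclideanSpace ℝ (Fin p) → EuclideanSpace ℝ (Fin p) →L[ℝ] EuclideanSpace ℝ (Fin p))
    (ℓ : ℝ≥0) (α β γ ζ L μ ε : ℝ)
    (hα : 0 < α) (hβ : 0 < β) (hγ : 0 < γ) (hζ : 0 < ζ) (hL : 0 < L) (hμ : 0 < μ)
    -- plant
    (hf_smooth : ContDiff ℝ 1 (Function.uncurry f))
    (hh_diff : Differentiable ℝ h)
    (hh_lip : LipschitzWith ℓ h)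
    (hsteady : ∀ u, f (h u) u = 0)
    -- Lyapunov function for the plant
    (hW_diff : Differentiable ℝ (Function.uncurry W))
    (hW_lb : ∀ x u, α * ‖x - h u‖ ^ 2 ≤ W x u)
    (hW_ub : ∀ x u, W x u ≤ β * ‖x - h u‖ ^ 2)
    (hW_decay : ∀ x u, ⟪gradient (fun y => W y u) x, f x u⟫ ≤ -γ * ‖x - h u‖ ^ 2)
    (hW_gradu : ∀ x u, ‖gradient (fun v => W x v) u‖ ≤ ζ * ‖x - h u‖)
    -- objective and the L-bound
    (hΦ_smooth : ContDiff ℝ 1 (Function.uncurry Φ))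
    (hLbound : ∀ x x' u,
      ‖(ContinuousLinearMap.adjoint (fderiv ℝ h u)
            (gradient (fun y => Φ y u) x' - gradient (fun y => Φ y u) x) +
          (gradient (fun v => Φ x' v) u - gradient (fun v => Φ x v) u))‖ ≤ L * ‖x' - x‖)
    -- the reduced cost Φ̃(u) = Φ(h(u),u) is C² and μ-strongly convex
    (hred_C2 : ContDiff ℝ 2 (fun u => Φ (h u) u))
    (hstrong : ∀ u v : EuclideanSpace ℝ (Fin p),
      μ * ‖v‖ ^ 2 ≤ ⟪fderiv ℝ (gradient (fun w => Φ (h w) w)) u v, v⟫)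
    -- Newton metric Q(u) = ε (∇²Φ̃(u))⁻¹
    (hQ_newton : ∀ u v : EuclideanSpace ℝ (Fin p),
      fderiv ℝ (gradient (fun w => Φ (h w) w)) u (Q u v) = ε • v ∧
      Q u (fderiv ℝ (gradient (fun w => Φ (h w) w)) u v) = ε • v)
    (hε : 0 < ε) (hεbound : ε < γ * μ / (ζ * L))
    -- a complete solution of the interconnection
    (x : ℝ → EuclideanSpace ℝ (Fin n)) (u : ℝ → EuclideanSpace ℝ (Fin p))
    (hsolx : ∀ t ≥ (0 : ℝ), HasDerivAt x (f (x t) (u t)) t)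
    (hsolu : ∀ t ≥ (0 : ℝ), HasDerivAt u
      (-(Q (u t) (ContinuousLinearMap.adjoint (fderiv ℝ h (u t))
          (gradient (fun y => Φ y (u t)) (x t)) +
        gradient (fun v => Φ (x t) v) (u t)))) t) :
    ∃ us : EuclideanSpace ℝ (Fin p),
      (∀ v, Φ (h us) us ≤ Φ (h v) v) ∧
      (∀ v, (∀ w, Φ (h v) v ≤ Φ (h w) w) → v = us) ∧
      Tendsto (fun t => (x t, u t)) atTop
        (nhds ((h us, us) : EuclideanSpace ℝ (Fin n) × EuclideanSpace ℝ (Fin p))) := by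
  have hφ : HasHessianLowerBound (fun v => Φ (h v) v) μ :=
    ⟨hred_C2.differentiable (by norm_num), (contDiff_gradient hred_C2).differentiable one_ne_zero,
      hstrong⟩
  exact stmt6_general hα hβ hζ hL hμ hh_diff ⟨hsteady, hW_diff, hW_lb, hW_ub, hW_decay, hW_gradu⟩
    (hΦ_smooth.differentiable one_ne_zero)
    (fun x x' u => by simpa only [feedbackGradient, map_sub, add_sub_add_comm] using hLbound x x' u)
    hφ (fun u v => (hQ_newton u v).1) hε hεbound hsolx hsolu
end

section
/- Let h : ℝᵖ → ℝⁿ and Φ : ℝⁿ × ℝᵖ → ℝ be differentiable, let L > 0 satisfy ‖H(u)ᵀ(∇Φ(x',u) − ∇Φ(x,u))‖ ≤ L‖x' − x‖ for all x, x', u, and let Q(u) : ℝᵖ → ℝᵖ be symmetric positive semidefinite with ‖Q(u)‖ ≤ κ² for some κ > 0. Define Φ̃(u) := Φ(h(u),u) and g(x,u) := −H(u)ᵀ∇Φ(x,u), and for v ∈ ℝᵖ write ‖v‖_{Q(u)} := √⟨Q(u)v, v⟩. Then for all x ∈ ℝⁿ and u ∈ ℝᵖ: ⟨∇Φ̃(u),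 Q(u)g(x,u)⟩ ≤ κL‖x − h(u)‖·‖g(x,u)‖_{Q(u)} − ‖g(x,u)‖²_{Q(u)}. -/
open Filter Metric Real
open scoped RealInnerProductSpace Topology

/-!
The reduced gradient at `u` is `H(u)ᵀ∇Φ(h(u), u)` by the chain rule, so it differs from
`-g = H(u)ᵀ∇Φ(x, u)` by at most `L‖x - h(u)‖`. Splitting `⟨∇Φ̃, Q g⟩ = ⟨∇Φ̃ + g, Q g⟩ - ⟨g, Q g⟩`,
the last term is the gain `‖g‖²_Q`, and the first is controlled by the Cauchy-Schwarz inequality of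
the semidefinite form `⟨Q ·, ·⟩` together with `‖·‖_Q ≤ κ‖·‖`.
-/

section WeightedNorm

open scoped InnerProductSpace

variable {𝕜 E : Type*} [RCLike 𝕜] [NormedAddCommGroup E] [InnerProductSpace 𝕜 E]

/-- The seminorm `‖v‖_T = √⟨T v, v⟩` of a positive semidefinite operator `T`, in which descent
directions are measured. The real part lets the definition cover complex spaces; for general `T`
the square root replaces negative values of `⟨T v, v⟩` by `0`. -/
noncomputable def weightedNorm (T : E →ₗ[𝕜] E) (v : E) : ℝ :=
  √(RCLike.re ⟪T v, v⟫_𝕜)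

theorem weightedNorm_nonneg (T : E →ₗ[𝕜] E) (v : E) : 0 ≤ weightedNorm T v :=
  Real.sqrt_nonneg _

theorem sq_weightedNorm {T : E →ₗ[𝕜] E} (hT : T.IsPositive) (v : E) :
    weightedNorm T v ^ 2 = RCLike.re ⟪T v, v⟫_𝕜 :=
  Real.sq_sqrt (hT.re_inner_nonneg_left v)

theorem norm_inner_map_le_weightedNorm_mul {T : E →ₗ[𝕜] E} (hT : T.IsPositive) (v w : E) :
    ‖⟪T v, w⟫_𝕜‖ ≤ weightedNorm T v * weightedNorm T w := by
  let core : PreInnerProductSpace.Core 𝕜 E :=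
    { inner := fun x y ↦ ⟪T x, y⟫_𝕜
      conj_inner_symm := fun x y ↦ by rw [inner_conj_symm, hT.isSymmetric]
      re_inner_nonneg := hT.re_inner_nonneg_left
      add_left := fun x y z ↦ by rw [map_add, inner_add_left]
      smul_left := fun x y r ↦ by rw [map_smul, inner_smul_left] }
  exact InnerProductSpace.Core.norm_inner_le_norm (c := core) v w

theorem weightedNorm_le_sqrt_opNorm_mul (T : E →L[𝕜] E) (v : E) :
    weightedNorm (T : E →ₗ[𝕜] E) v ≤ √‖T‖ * ‖v‖ := by
  have h_form : RCLike.re ⟪T v, v⟫_𝕜 ≤ ‖T‖ * ‖v‖ ^ 2 :=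
    calc RCLike.re ⟪T v, v⟫_𝕜 ≤ ‖T v‖ * ‖v‖ := re_inner_le_norm _ _
      _ ≤ ‖T‖ * ‖v‖ * ‖v‖ := by gcongr; exact T.le_opNorm v
      _ = ‖T‖ * ‖v‖ ^ 2 := by ring
  calc weightedNorm (T : E →ₗ[𝕜] E) v ≤ √(‖T‖ * ‖v‖ ^ 2) := Real.sqrt_le_sqrt h_form
    _ = √‖T‖ * ‖v‖ := by rw [Real.sqrt_mul (norm_nonneg T), Real.sqrt_sq (norm_nonneg v)]

theorem re_inner_map_le_sub_sq_weightedNorm {T : E →L[𝕜] E} (hT : T.IsPositive) (d g : E) :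
    RCLike.re ⟪d, T g⟫_𝕜 ≤
      √‖T‖ * ‖d + g‖ * weightedNorm (T : E →ₗ[𝕜] E) g - weightedNorm (T : E →ₗ[𝕜] E) g ^ 2 := by
  have h_split : RCLike.re ⟪d, T g⟫_𝕜 =
      RCLike.re ⟪T (d + g), g⟫_𝕜 - weightedNorm (T : E →ₗ[𝕜] E) g ^ 2 := by
    rw [sq_weightedNorm hT, ContinuousLinearMap.coe_coe, map_add, inner_add_left, map_add,
      add_sub_cancel_right, hT.inner_left_eq_inner_right]
  have h_cauchy_schwarz : RCLike.re ⟪T (d + g), g⟫_𝕜 ≤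
      √‖T‖ * ‖d + g‖ * weightedNorm (T : E →ₗ[𝕜] E) g :=
    calc RCLike.re ⟪T (d + g), g⟫_𝕜
        ≤ weightedNorm (T : E →ₗ[𝕜] E) (d + g) * weightedNorm (T : E →ₗ[𝕜] E) g :=
          (RCLike.re_le_norm _).trans (norm_inner_map_le_weightedNorm_mul hT _ _)
      _ ≤ √‖T‖ * ‖d + g‖ * weightedNorm (T : E →ₗ[𝕜] E) g :=
          mul_le_mul_of_nonneg_right (weightedNorm_le_sqrt_opNorm_mul T _)
            (weightedNorm_nonneg _ _)
  rw [h_split]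
  exact sub_le_sub_right h_cauchy_schwarz _

end WeightedNorm

theorem hasFDerivAt_comp_graph {𝕜 E F G : Type*} [NontriviallyNormedField 𝕜]
    [NormedAddCommGroup E] [NormedSpace 𝕜 E] [NormedAddCommGroup F] [NormedSpace 𝕜 F]
    [NormedAddCommGroup G] [NormedSpace 𝕜 G] {h : E → F} {Φ : F → E → G} {u : E}
    (hh : DifferentiableAt 𝕜 h u)
    (hΦ : DifferentiableAt 𝕜 (Function.uncurry Φ) (h u, u)) :
    HasFDerivAt (fun w ↦ Φ (h w) w)
      (fderiv 𝕜 (fun y ↦ Φ y u) (h u) ∘L fderiv 𝕜 h u + fderiv 𝕜 (fun v ↦ Φ (h u) v) u) u := by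
  let D := fderiv 𝕜 (Function.uncurry Φ) (h u, u)
  have hD : HasFDerivAt (Function.uncurry Φ) D (h u, u) := hΦ.hasFDerivAt
  have h_fst : HasFDerivAt (fun y ↦ Φ y u) (D ∘L .inl 𝕜 F E) (h u) :=
    hD.comp (f := fun y ↦ (y, u)) (h u) (hasFDerivAt_prodMk_left (h u) u)
  have h_snd : HasFDerivAt (fun v ↦ Φ (h u) v) (D ∘L .inr 𝕜 F E) u :=
    hD.comp (f := fun v ↦ (h u, v)) u (hasFDerivAt_prodMk_right (h u) u)
  have h_graph : HasFDerivAt (fun w ↦ Φ (h w) w) (D ∘L (fderiv 𝕜 h u).prod (.id 𝕜 E)) u :=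
    hD.comp (f := fun w ↦ (h w, w)) u (hh.hasFDerivAt.prodMk (hasFDerivAt_id u))
  rw [h_fst.fderiv, h_snd.fderiv]
  convert h_graph using 1
  ext v
  simp [← map_add]

section ReducedGradient

variable {𝕜 E F : Type*} [RCLike 𝕜]
  [NormedAddCommGroup E] [InnerProductSpace 𝕜 E] [CompleteSpace E]
  [NormedAddCommGroup F] [InnerProductSpace 𝕜 F] [CompleteSpace F]

/-- The vector `H(u)ᵀ∇Φ(x, u) = Dh(u)ᵀ∇ₓΦ(x, u) + ∇ᵤΦ(x, u)`, which estimates the gradient of the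
reduced cost `w ↦ Φ (h w) w` at `u` from a point `x` standing in for `h u`. The transpose is encoded
as the Hilbert space adjoint. -/
noncomputable def reducedGradient (h : E → F) (Φ : F → E → 𝕜) (x : F) (u : E) : E :=
  ContinuousLinearMap.adjoint (fderiv 𝕜 h u) (gradient (fun y ↦ Φ y u) x) +
    gradient (fun v ↦ Φ x v) u

theorem reducedGradient_sub (h : E → F) (Φ : F → E → 𝕜) (x' x : F) (u : E) :
    reducedGradient h Φ x' u - reducedGradient h Φ x u =
      ContinuousLinearMap.adjoint (fderiv 𝕜 h u)
          (gradient (fun y ↦ Φ y u) x' - gradient (fun y ↦ Φ y u) x) +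
        (gradient (fun v ↦ Φ x' v) u - gradient (fun v ↦ Φ x v) u) := by
  rw [map_sub]
  exact add_sub_add_comm _ _ _ _

theorem gradient_comp_graph {h : E → F} {Φ : F → E → 𝕜} {u : E}
    (hh : DifferentiableAt 𝕜 h u)
    (hΦ : DifferentiableAt 𝕜 (Function.uncurry Φ) (h u, u)) :
    gradient (fun w ↦ Φ (h w) w) u = reducedGradient h Φ (h u) u := by
  refine ext_inner_right 𝕜 fun v ↦ ?_
  rw [reducedGradient, inner_add_left, ContinuousLinearMap.adjoint_inner_left]
  simp only [inner_gradient_left, (hasFDerivAt_comp_graph hh hΦ).fderiv,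
    add_apply, ContinuousLinearMap.comp_apply]

end ReducedGradient

theorem stmt7_general {E F : Type*}
    [NormedAddCommGroup E] [InnerProductSpace ℝ E] [CompleteSpace E]
    [NormedAddCommGroup F] [InnerProductSpace ℝ F] [CompleteSpace F]
    {h : E → F} {Φ : F → E → ℝ} {T : E →L[ℝ] E} {L κ : ℝ} {x : F} {u : E}
    (hκ : 0 ≤ κ) (hh : DifferentiableAt ℝ h u)
    (hΦ : DifferentiableAt ℝ (Function.uncurry Φ) (h u, u))
    (hL : ‖reducedGradient h Φ (h u) u - reducedGradient h Φ x u‖ ≤ L * ‖h u - x‖)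
    (hT : T.IsPositive) (hT_norm : ‖T‖ ≤ κ ^ 2) :
    ⟪gradient (fun w ↦ Φ (h w) w) u, T (-reducedGradient h Φ x u)⟫ ≤
      κ * L * ‖x - h u‖ * weightedNorm (T : E →ₗ[ℝ] E) (-reducedGradient h Φ x u) -
        weightedNorm (T : E →ₗ[ℝ] E) (-reducedGradient h Φ x u) ^ 2 := by
  rw [gradient_comp_graph hh hΦ]
  set d := reducedGradient h Φ (h u) u
  set g := -reducedGradient h Φ x u with hg
  have h_error : ‖d + g‖ ≤ L * ‖x - h u‖ := by
    rwa [hg, ← sub_eq_add_neg, norm_sub_rev x]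
  have h_sqrt : √‖T‖ ≤ κ := Real.sqrt_le_iff.mpr ⟨hκ, hT_norm⟩
  have h_coeff : √‖T‖ * ‖d + g‖ ≤ κ * L * ‖x - h u‖ := by
    rw [mul_assoc]
    exact mul_le_mul h_sqrt h_error (norm_nonneg _) hκ
  exact (re_inner_map_le_sub_sq_weightedNorm hT d g).trans <|
    sub_le_sub_right (mul_le_mul_of_nonneg_right h_coeff (weightedNorm_nonneg _ g)) _

/-- Key descent estimate: for `g(x,u) = -H(u)ᵀ∇Φ(x,u)` and a positive
semidefinite metric `Q(u)` with `‖Q(u)‖ ≤ κ²`,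
`⟨∇Φ̃(u), Q(u)g(x,u)⟩ ≤ κL‖x - h(u)‖·‖g(x,u)‖_{Q(u)} - ‖g(x,u)‖²_{Q(u)}`. -/
theorem stmt7 {n p : ℕ}
    (h : EuclideanSpace ℝ (Fin p) → EuclideanSpace ℝ (Fin n))
    (Φ : EuclideanSpace ℝ (Fin n) → EuclideanSpace ℝ (Fin p) → ℝ)
    (Q : EuclideanSpace ℝ (Fin p) → EuclideanSpace ℝ (Fin p) →L[ℝ] EuclideanSpace ℝ (Fin p))
    (L κ : ℝ) (hL : 0 < L) (hκ : 0 < κ)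
    (hh_diff : Differentiable ℝ h)
    (hΦ_diff : Differentiable ℝ (Function.uncurry Φ))
    (hLbound : ∀ x x' u,
      ‖(ContinuousLinearMap.adjoint (fderiv ℝ h u)
            (gradient (fun y => Φ y u) x' - gradient (fun y => Φ y u) x) +
          (gradient (fun v => Φ x' v) u - gradient (fun v => Φ x v) u))‖ ≤ L * ‖x' - x‖)
    (hQ_symm : ∀ u v w, ⟪Q u v, w⟫ = ⟪v, Q u w⟫)
    (hQ_psd : ∀ u v, 0 ≤ ⟪Q u v, v⟫)
    (hQ_norm : ∀ u, ‖Q u‖ ≤ κ ^ 2) :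
    ∀ (x : EuclideanSpace ℝ (Fin n)) (u : EuclideanSpace ℝ (Fin p)),
      ⟪gradient (fun w => Φ (h w) w) u,
          Q u (-(ContinuousLinearMap.adjoint (fderiv ℝ h u) (gradient (fun y => Φ y u) x) +
            gradient (fun v => Φ x v) u))⟫ ≤
        κ * L * ‖x - h u‖ *
          Real.sqrt ⟪Q u (-(ContinuousLinearMap.adjoint (fderiv ℝ h u)
              (gradient (fun y => Φ y u) x) + gradient (fun v => Φ x v) u)),
            -(ContinuousLinearMap.adjoint (fderiv ℝ h u) (gradient (fun y => Φ y u) x) +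
              gradient (fun v => Φ x v) u)⟫ -
        ⟪Q u (-(ContinuousLinearMap.adjoint (fderiv ℝ h u) (gradient (fun y => Φ y u) x) +
            gradient (fun v => Φ x v) u)),
          -(ContinuousLinearMap.adjoint (fderiv ℝ h u) (gradient (fun y => Φ y u) x) +
            gradient (fun v => Φ x v) u)⟫ := by
  intro x u
  have hQ : (Q u).IsPositive := ⟨hQ_symm u, hQ_psd u⟩
  exact (stmt7_general hκ.le (hh_diff u) (hΦ_diff _)
    ((reducedGradient_sub h Φ _ x u).symm ▸ hLbound x (h u) u) hQ (hQ_norm u)).trans_eq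
      (congrArg _ (sq_weightedNorm hQ _))
end

section
/- Let Φ̃ : ℝᵖ → ℝ be continuously differentiable with locally Lipschitz gradient and compact sublevel sets, and let Q, D be locally Lipschitz maps assigning to each u ∈ ℝᵖ symmetric positive definite linear maps Q(u), D(u) : ℝᵖ → ℝᵖ. Consider the heavy-ball dynamics u̇ = Q(u)z, ż = −D(u)z − Q(u)∇Φ̃(u) on ℝᵖ × ℝᵖ. Then along every complete solution (u,z) : [0,∞) → ℝᵖ × ℝᵖ, the function V(u,z) := Φ̃(u) + ½‖z‖² satisfies d/dt V(u(t),z(t)) = −⟨D(u(t))z(t), z(t)⟩ ≤ 0, and the solution converges to the set {(u,z) : z = 0 and ∇Φ̃(u) = 0}, i.e. dist((u(t),z(t)), this set) → 0 as t → ∞. -/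
open Filter Metric Real
open scoped RealInnerProductSpace Topology

/-!
The energy `V = Φ + ½‖z‖²` is a Lyapunov function: the two terms of `V̇` containing `Q` cancel
because `Q` is symmetric, leaving the dissipation `-⟪D z, z⟫`. Hence the trajectory stays in a
compact sublevel set of `V`, on which the vector field is bounded, so continuous functions of the
state are uniformly continuous in time. Barbalat's lemma (a convergent function with uniformly
continuous derivative has derivative tending to `0`) then applies twice. Applied to `V` it gives
`⟪D z, z⟫ → 0`, so `z → 0` by compactness. Applied to `z` it gives `ż → 0`. As the equilibria are
exactly the points where `z` and `ż` both vanish, compactness once more gives convergence to them.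
-/

open Set

section Barbalat

variable {E F : Type*} [NormedAddCommGroup E] [NormedSpace ℝ E]
  [NormedAddCommGroup F] [NormedSpace ℝ F] {a : ℝ}

theorem norm_sub_sub_smul_le_of_norm_deriv_sub_le {φ φ' : ℝ → E} {v : E} {b C : ℝ} (hab : a ≤ b)
    (hφ : ∀ t ∈ Icc a b, HasDerivWithinAt φ (φ' t) (Icc a b) t)
    (hC : ∀ t ∈ Icc a b, ‖φ' t - v‖ ≤ C) :
    ‖φ b - φ a - (b - a) • v‖ ≤ C * (b - a) := by
  have hderiv : ∀ t ∈ Icc a b,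
      HasDerivWithinAt (fun s => φ s - s • v) (φ' t - (1 : ℝ) • v) (Icc a b) t :=
    fun t ht => (hφ t ht).sub ((hasDerivWithinAt_id t _).smul_const v)
  have hmvt := (convex_Icc a b).norm_image_sub_le_of_norm_hasDerivWithin_le hderiv
    (fun t ht => by simpa only [one_smul] using hC t ht)
    (left_mem_Icc.2 hab) (right_mem_Icc.2 hab)
  rwa [sub_sub_sub_comm, ← sub_smul, Real.norm_of_nonneg (sub_nonneg.2 hab)] at hmvt

/-- Barbalat's lemma. -/
theorem tendsto_deriv_zero_of_uniformContinuousOn {φ φ' : ℝ → E} {l : E}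
    (hl : Tendsto φ atTop (𝓝 l))
    (hφ : ∀ t ∈ Ici a, HasDerivWithinAt φ (φ' t) (Ici a) t)
    (hφ' : UniformContinuousOn φ' (Ici a)) : Tendsto φ' atTop (𝓝 0) := by
  rw [Metric.tendsto_nhds]
  intro ε hε
  obtain ⟨η, hη, hφ'η⟩ := Metric.uniformContinuousOn_iff.1 hφ' (ε / 2) (half_pos hε)
  obtain ⟨δ, hδ, hδη⟩ := exists_between hη
  have hincr : Tendsto (fun t => φ (t + δ) - φ t) atTop (𝓝 0) := by
    simpa only [sub_self, id_eq, Function.comp_def] using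
      (hl.comp (tendsto_atTop_add_const_right _ δ tendsto_id)).sub hl
  filter_upwards [Metric.tendsto_nhds.1 hincr (δ * (ε / 2)) (by positivity),
    eventually_ge_atTop a] with t hsmall hat
  rw [dist_zero_right] at hsmall ⊢
  have hIcc : Icc t (t + δ) ⊆ Ici a := fun s hs => hat.trans hs.1
  have hlin : ‖φ (t + δ) - φ t - (t + δ - t) • φ' t‖ ≤ ε / 2 * (t + δ - t) := by
    refine norm_sub_sub_smul_le_of_norm_deriv_sub_le (by linarith)
      (fun s hs => (hφ s (hIcc hs)).mono hIcc) fun s hs => ?_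
    rw [← dist_eq_norm]
    refine (hφ'η s (hIcc hs) t hat ?_).le
    rw [Real.dist_eq, abs_of_nonneg (sub_nonneg.2 hs.1)]
    linarith [hs.2]
  rw [add_sub_cancel_left] at hlin
  refine lt_of_mul_lt_mul_left ?_ hδ.le
  calc δ * ‖φ' t‖ = ‖δ • φ' t‖ := by rw [norm_smul, Real.norm_of_nonneg hδ.le]
    _ ≤ ‖φ (t + δ) - φ t‖ + ‖φ (t + δ) - φ t - δ • φ' t‖ := by
      simpa only [sub_sub_cancel] using
        norm_sub_le (φ (t + δ) - φ t) (φ (t + δ) - φ t - δ • φ' t)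
    _ < δ * (ε / 2) + ε / 2 * δ := add_lt_add_of_lt_of_le hsmall hlin
    _ = δ * ε := by ring

variable {f : E → E} {x : ℝ → E} {K : Set E}

theorem uniformContinuousOn_comp_of_mapsTo_isCompact {Y : Type*} [UniformSpace Y] {g : E → Y}
    (hK : IsCompact K) (hxK : MapsTo x (Ici a) K) (hf : ContinuousOn f K)
    (hx : ∀ t ∈ Ici a, HasDerivWithinAt x (f (x t)) (Ici a) t) (hg : ContinuousOn g K) :
    UniformContinuousOn (g ∘ x) (Ici a) := by
  obtain ⟨C, hC⟩ := hK.exists_bound_of_continuousOn hf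
  have hlip : LipschitzOnWith C.toNNReal x (Ici a) :=
    (convex_Ici a).lipschitzOnWith_of_nnnorm_hasDerivWithin_le hx fun t ht =>
      NNReal.coe_le_coe.1 ((hC _ (hxK ht)).trans (Real.le_coe_toNNReal C))
  exact (hK.uniformContinuousOn_of_continuous hg).comp hlip.uniformContinuousOn hxK

theorem tendsto_deriv_zero_of_mapsTo_isCompact {g : E → F} {φ : ℝ → F} {l : F}
    (hK : IsCompact K) (hxK : MapsTo x (Ici a) K) (hf : ContinuousOn f K)
    (hx : ∀ t ∈ Ici a, HasDerivWithinAt x (f (x t)) (Ici a) t) (hg : ContinuousOn g K)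
    (hl : Tendsto φ atTop (𝓝 l))
    (hφ : ∀ t ∈ Ici a, HasDerivWithinAt φ (g (x t)) (Ici a) t) :
    Tendsto (g ∘ x) atTop (𝓝 0) :=
  tendsto_deriv_zero_of_uniformContinuousOn hl hφ
    (uniformContinuousOn_comp_of_mapsTo_isCompact hK hxK hf hx hg)

end Barbalat

section Lyapunov

theorem exists_tendsto_atTop_of_antitoneOn_Ici {φ : ℝ → ℝ} {a : ℝ} (hφ : AntitoneOn φ (Ici a))
    (hbdd : BddBelow (φ '' Ici a)) : ∃ l, Tendsto φ atTop (𝓝 l) := by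
  have hanti : Antitone fun t => φ (max a t) := fun s t hst =>
    hφ (le_max_left a s) (le_max_left a t) (max_le_max_left a hst)
  have hbdd' : BddBelow (range fun t => φ (max a t)) :=
    hbdd.mono (range_subset_iff.2 fun t => mem_image_of_mem φ (le_max_left a t))
  refine ⟨_, (tendsto_atTop_ciInf hanti hbdd').congr' ?_⟩
  filter_upwards [eventually_ge_atTop a] with t ht
  rw [max_eq_right ht]

variable {E : Type*} {V W : E → ℝ} {x : ℝ → E} {a : ℝ}

theorem antitoneOn_comp_of_dissipation
    (hV : ∀ t ∈ Ici a, HasDerivWithinAt (V ∘ x) (-W (x t)) (Ici a) t)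
    (hW : ∀ t ∈ Ici a, 0 ≤ W (x t)) : AntitoneOn (V ∘ x) (Ici a) :=
  antitoneOn_of_hasDerivWithinAt_nonpos (convex_Ici a)
    (fun t ht => (hV t ht).continuousWithinAt)
    (fun t ht => (hV t (interior_subset ht)).mono interior_subset)
    fun t ht => neg_nonpos.2 (hW t (interior_subset ht))

theorem mapsTo_sublevel_of_dissipation
    (hV : ∀ t ∈ Ici a, HasDerivWithinAt (V ∘ x) (-W (x t)) (Ici a) t)
    (hW : ∀ t ∈ Ici a, 0 ≤ W (x t)) : MapsTo x (Ici a) {y | V y ≤ V (x a)} :=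
  fun _ ht => antitoneOn_comp_of_dissipation hV hW self_mem_Ici ht ht

/-- The LaSalle–Yoshizawa theorem, for autonomous systems. -/
theorem tendsto_dissipation_zero_of_isCompact_sublevel [NormedAddCommGroup E]
    [NormedSpace ℝ E] {f : E → E}
    (hK : IsCompact {y | V y ≤ V (x a)}) (hf : ContinuousOn f {y | V y ≤ V (x a)})
    (hVc : ContinuousOn V {y | V y ≤ V (x a)}) (hWc : ContinuousOn W {y | V y ≤ V (x a)})
    (hx : ∀ t ∈ Ici a, HasDerivWithinAt x (f (x t)) (Ici a) t)
    (hV : ∀ t ∈ Ici a, HasDerivWithinAt (V ∘ x) (-W (x t)) (Ici a) t)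
    (hW : ∀ t ∈ Ici a, 0 ≤ W (x t)) : Tendsto (W ∘ x) atTop (𝓝 0) := by
  have hxK := mapsTo_sublevel_of_dissipation hV hW
  have hbdd : BddBelow (V ∘ x '' Ici a) := by
    rw [image_comp]
    exact (hK.bddBelow_image hVc).mono (image_mono hxK.image_subset)
  obtain ⟨l, hl⟩ := exists_tendsto_atTop_of_antitoneOn_Ici
    (antitoneOn_comp_of_dissipation hV hW) hbdd
  have hneg : Tendsto (fun t => -W (x t)) atTop (𝓝 0) :=
    tendsto_deriv_zero_of_mapsTo_isCompact (g := fun y => -W y) hK hxK hf hx hWc.neg hl hV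
  simpa only [neg_neg, neg_zero, Function.comp_def] using hneg.neg

theorem tendsto_comp_of_tendsto_comp_of_isCompact {ι X Y Z : Type*} [TopologicalSpace X]
    [TopologicalSpace Y] [T2Space Y] [TopologicalSpace Z] {K : Set X} {g : X → Z} {h : X → Y}
    {x : ι → X} {l : Filter ι} {y : Y} {w : Z} (hK : IsCompact K) (hxK : ∀ᶠ t in l, x t ∈ K)
    (hg : ContinuousOn g K) (hh : ContinuousOn h K) (hgh : ∀ q ∈ K, h q = y → g q = w)
    (hlim : Tendsto (h ∘ x) l (𝓝 y)) : Tendsto (g ∘ x) l (𝓝 w) := by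
  rw [tendsto_iff_ultrafilter]
  intro U hU
  have hUK : ∀ᶠ t in (U : Filter ι), x t ∈ K := hU hxK
  obtain ⟨q, hqK, hUq⟩ := hK.ultrafilter_le_nhds (U.map x) (le_principal_iff.2 hUK)
  have hxq : Tendsto x U (𝓝[K] q) := tendsto_nhdsWithin_iff.2 ⟨hUq, hUK⟩
  have hhq : h q = y := tendsto_nhds_unique ((hh q hqK).tendsto.comp hxq) (hlim.mono_left hU)
  rw [← hgh q hqK hhq]
  exact (hg q hqK).tendsto.comp hxq

end Lyapunov

section HeavyBall

theorem injective_of_inner_map_self_pos {E F : Type*} [NormedAddCommGroup E]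
    [InnerProductSpace ℝ E] [FunLike F E E] [AddMonoidHomClass F E E] {f : F}
    (hf : ∀ v, v ≠ 0 → 0 < ⟪f v, v⟫) : Function.Injective f :=
  (injective_iff_map_eq_zero f).2 fun v hv =>
    by_contra fun hne => (hf v hne).ne' (by rw [hv, inner_zero_left])

section Energy

variable {E : Type*} [NormedAddCommGroup E] {Φ : E → ℝ}

/-- The total energy `Φ(u) + ½‖z‖²` of the heavy ball at position `u` with velocity variable `z`,
where the state is the pair `x = (u, z)`. It serves as the Lyapunov function. -/
noncomputable def heavyBallEnergy (Φ : E → ℝ) (x : E × E) : ℝ :=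
  Φ x.1 + (1 / 2) * ‖x.2‖ ^ 2

theorem continuous_heavyBallEnergy (hΦ : Continuous Φ) : Continuous (heavyBallEnergy Φ) := by
  unfold heavyBallEnergy
  fun_prop

theorem isCompact_heavyBallEnergy_sublevel [ProperSpace E] (hΦ : Continuous Φ) {c : ℝ}
    (hK : IsCompact {w | Φ w ≤ c}) : IsCompact {x | heavyBallEnergy Φ x ≤ c} := by
  obtain ⟨m, hm⟩ := hK.bddBelow_image hΦ.continuousOn
  refine (hK.prod (isCompact_closedBall 0 (√(2 * (c - m))))).of_isClosed_subset
    (isClosed_le (continuous_heavyBallEnergy hΦ) continuous_const) fun x hx => ?_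
  have hx' : Φ x.1 + (1 / 2) * ‖x.2‖ ^ 2 ≤ c := hx
  have hΦx : Φ x.1 ≤ c := by linarith [sq_nonneg ‖x.2‖]
  have hmΦ : m ≤ Φ x.1 := hm (mem_image_of_mem Φ hΦx)
  exact ⟨hΦx, mem_closedBall_zero_iff.2 (Real.le_sqrt_of_sq_le (by linarith))⟩

end Energy

section Dissipation

variable {E : Type*} [NormedAddCommGroup E] [InnerProductSpace ℝ E] {D : E → E →L[ℝ] E}

/-- The rate `⟪D(u) z, z⟫` at which the friction `D` drains energy in the state `x = (u, z)`. -/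
def heavyBallDissipation (D : E → E →L[ℝ] E) (x : E × E) : ℝ :=
  ⟪D x.1 x.2, x.2⟫

theorem continuous_heavyBallDissipation (hD : Continuous D) :
    Continuous (heavyBallDissipation D) := by
  unfold heavyBallDissipation
  fun_prop

theorem heavyBallDissipation_nonneg (hD : ∀ u v, v ≠ 0 → 0 < ⟪D u v, v⟫) (x : E × E) :
    0 ≤ heavyBallDissipation D x := by
  obtain hz | hz := eq_or_ne x.2 0
  · rw [heavyBallDissipation, hz, inner_zero_right]
  · exact (hD x.1 x.2 hz).le

theorem snd_eq_zero_of_heavyBallDissipation_eq_zero (hD : ∀ u v, v ≠ 0 → 0 < ⟪D u v, v⟫)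
    {x : E × E} (hx : heavyBallDissipation D x = 0) : x.2 = 0 :=
  by_contra fun hz => (hD x.1 x.2 hz).ne' hx

end Dissipation

section Dynamics

variable {E : Type*} [NormedAddCommGroup E] [InnerProductSpace ℝ E] [CompleteSpace E]
  {Φ : E → ℝ} {Q D : E → E →L[ℝ] E}

theorem continuous_gradient_of_contDiff (hΦ : ContDiff ℝ 1 Φ) : Continuous (gradient Φ) :=
  (InnerProductSpace.toDual ℝ E).symm.continuous.comp (hΦ.continuous_fderiv one_ne_zero)

/-- The vector field of the heavy-ball dynamics `u̇ = Q(u) z`, `ż = -D(u) z - Q(u) ∇Φ(u)`, on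
states `x = (u, z)`. -/
noncomputable def heavyBallField (Φ : E → ℝ) (Q D : E → E →L[ℝ] E) (x : E × E) : E × E :=
  (Q x.1 x.2, -(D x.1 x.2) - Q x.1 (gradient Φ x.1))

/-- The equilibria of the heavy ball: the critical points of `Φ`, at rest. They form the set to
which trajectories converge. -/
def heavyBallEquilibria (Φ : E → ℝ) : Set (E × E) :=
  {x | x.2 = 0 ∧ gradient Φ x.1 = 0}

theorem continuous_heavyBallField (hΦ : Continuous (gradient Φ)) (hQ : Continuous Q)
    (hD : Continuous D) : Continuous (heavyBallField Φ Q D) := by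
  unfold heavyBallField
  fun_prop

theorem mem_heavyBallEquilibria_of_field_snd_eq_zero {x : E × E}
    (hQ : Function.Injective (Q x.1)) (hz : x.2 = 0) (hfield : (heavyBallField Φ Q D x).2 = 0) :
    x ∈ heavyBallEquilibria Φ := by
  refine ⟨hz, (injective_iff_map_eq_zero (Q x.1)).1 hQ _ ?_⟩
  simpa only [heavyBallField, hz, map_zero, neg_zero, zero_sub, neg_eq_zero] using hfield

theorem hasDerivAt_heavyBallEnergy_comp {x : ℝ → E × E} {t : ℝ}
    (hΦ : DifferentiableAt ℝ Φ (x t).1)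
    (hQ : ∀ v w, ⟪Q (x t).1 v, w⟫ = ⟪v, Q (x t).1 w⟫)
    (hx : HasDerivAt x (heavyBallField Φ Q D (x t)) t) :
    HasDerivAt (heavyBallEnergy Φ ∘ x) (-heavyBallDissipation D (x t)) t := by
  have hpot : HasDerivAt (fun s => Φ (x s).1) _ t := hΦ.hasFDerivAt.comp_hasDerivAt t hx.fst
  have hz : HasDerivAt (fun s => (x s).2) (heavyBallField Φ Q D (x t)).2 t := hx.snd
  refine (hpot.add (hz.norm_sq.const_mul (1 / 2 : ℝ))).congr_deriv ?_
  simp only [heavyBallField, heavyBallDissipation, ← inner_gradient_left, inner_sub_right,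
    inner_neg_right]
  rw [← hQ, real_inner_comm (x t).2 (D (x t).1 (x t).2),
    real_inner_comm (x t).2 (Q (x t).1 (gradient Φ (x t).1))]
  ring

theorem mapsTo_heavyBallEnergy_sublevel {x : ℝ → E × E} (hΦ : Differentiable ℝ Φ)
    (hQ_symm : ∀ u v w, ⟪Q u v, w⟫ = ⟪v, Q u w⟫) (hD_pos : ∀ u v, v ≠ 0 → 0 < ⟪D u v, v⟫)
    (hx : ∀ t ≥ (0 : ℝ), HasDerivAt x (heavyBallField Φ Q D (x t)) t) :
    MapsTo x (Ici 0) {y | heavyBallEnergy Φ y ≤ heavyBallEnergy Φ (x 0)} :=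
  mapsTo_sublevel_of_dissipation
    (fun t ht =>
      (hasDerivAt_heavyBallEnergy_comp (hΦ _) (hQ_symm _) (hx t ht)).hasDerivWithinAt)
    fun t _ => heavyBallDissipation_nonneg hD_pos (x t)

end Dynamics

section Convergence

variable {E : Type*} [NormedAddCommGroup E] [InnerProductSpace ℝ E] [ProperSpace E]
  {Φ : E → ℝ} {Q D : E → E →L[ℝ] E} {x : ℝ → E × E}

theorem tendsto_snd_zero_of_heavyBall (hΦ : ContDiff ℝ 1 Φ) (hQ : Continuous Q)
    (hD : Continuous D) (hQ_symm : ∀ u v w, ⟪Q u v, w⟫ = ⟪v, Q u w⟫)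
    (hD_pos : ∀ u v, v ≠ 0 → 0 < ⟪D u v, v⟫)
    (hlevel : IsCompact {w | Φ w ≤ heavyBallEnergy Φ (x 0)})
    (hx : ∀ t ≥ (0 : ℝ), HasDerivAt x (heavyBallField Φ Q D (x t)) t) :
    Tendsto (Prod.snd ∘ x) atTop (𝓝 0) := by
  have hdiff := hΦ.differentiable one_ne_zero
  have hK := isCompact_heavyBallEnergy_sublevel hΦ.continuous hlevel
  have hxK := mapsTo_heavyBallEnergy_sublevel hdiff hQ_symm hD_pos hx
  have hfield := continuous_heavyBallField (continuous_gradient_of_contDiff hΦ) hQ hD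
  have hdiss := continuous_heavyBallDissipation hD
  have hdiss_lim : Tendsto (heavyBallDissipation D ∘ x) atTop (𝓝 0) :=
    tendsto_dissipation_zero_of_isCompact_sublevel hK hfield.continuousOn
      (continuous_heavyBallEnergy hΦ.continuous).continuousOn hdiss.continuousOn
      (fun t ht => (hx t ht).hasDerivWithinAt)
      (fun t ht => (hasDerivAt_heavyBallEnergy_comp (hdiff _) (hQ_symm _)
        (hx t ht)).hasDerivWithinAt)
      fun t _ => heavyBallDissipation_nonneg hD_pos (x t)
  exact tendsto_comp_of_tendsto_comp_of_isCompact hK ((eventually_ge_atTop 0).mono hxK)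
    continuousOn_snd hdiss.continuousOn
    (fun _ _ => snd_eq_zero_of_heavyBallDissipation_eq_zero hD_pos) hdiss_lim

theorem tendsto_infDist_heavyBallEquilibria (hΦ : ContDiff ℝ 1 Φ) (hQ : Continuous Q)
    (hD : Continuous D) (hQ_symm : ∀ u v w, ⟪Q u v, w⟫ = ⟪v, Q u w⟫)
    (hQ_inj : ∀ u, Function.Injective (Q u)) (hD_pos : ∀ u v, v ≠ 0 → 0 < ⟪D u v, v⟫)
    (hlevel : IsCompact {w | Φ w ≤ heavyBallEnergy Φ (x 0)})
    (hx : ∀ t ≥ (0 : ℝ), HasDerivAt x (heavyBallField Φ Q D (x t)) t) :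
    Tendsto (fun t => infDist (x t) (heavyBallEquilibria Φ)) atTop (𝓝 0) := by
  have hK := isCompact_heavyBallEnergy_sublevel hΦ.continuous hlevel
  have hxK := mapsTo_heavyBallEnergy_sublevel (hΦ.differentiable one_ne_zero) hQ_symm hD_pos hx
  have hfield := continuous_heavyBallField (continuous_gradient_of_contDiff hΦ) hQ hD
  have hz : Tendsto (Prod.snd ∘ x) atTop (𝓝 0) :=
    tendsto_snd_zero_of_heavyBall hΦ hQ hD hQ_symm hD_pos hlevel hx
  have hz' : Tendsto (fun t => (heavyBallField Φ Q D (x t)).2) atTop (𝓝 0) :=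
    tendsto_deriv_zero_of_mapsTo_isCompact (g := fun y => (heavyBallField Φ Q D y).2) hK hxK
      hfield.continuousOn (fun t ht => (hx t ht).hasDerivWithinAt) hfield.snd.continuousOn hz
      fun t ht => (hx t ht).hasDerivWithinAt.snd
  refine tendsto_comp_of_tendsto_comp_of_isCompact (g := fun y => infDist y _)
    (h := fun y => (y.2, (heavyBallField Φ Q D y).2)) hK ((eventually_ge_atTop 0).mono hxK)
    (continuous_infDist_pt _).continuousOn (continuous_snd.prodMk hfield.snd).continuousOn
    (fun y _ hy => ?_) (hz.prodMk_nhds hz')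
  obtain ⟨hy₁, hy₂⟩ := Prod.mk.inj hy
  exact infDist_zero_of_mem (mem_heavyBallEquilibria_of_field_snd_eq_zero (hQ_inj _) hy₁ hy₂)

theorem stmt9_general (hΦ : ContDiff ℝ 1 Φ) (hQ : Continuous Q)
    (hD : Continuous D) (hQ_symm : ∀ u v w, ⟪Q u v, w⟫ = ⟪v, Q u w⟫)
    (hQ_inj : ∀ u, Function.Injective (Q u)) (hD_pos : ∀ u v, v ≠ 0 → 0 < ⟪D u v, v⟫)
    (hlevel : IsCompact {w | Φ w ≤ heavyBallEnergy Φ (x 0)})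
    (hx : ∀ t ≥ (0 : ℝ), HasDerivAt x (heavyBallField Φ Q D (x t)) t) :
    (∀ t ≥ (0 : ℝ),
      HasDerivAt (heavyBallEnergy Φ ∘ x) (-heavyBallDissipation D (x t)) t ∧
      -heavyBallDissipation D (x t) ≤ 0) ∧
    Tendsto (fun t => infDist (x t) (heavyBallEquilibria Φ)) atTop (𝓝 0) :=
  ⟨fun t ht =>
    ⟨hasDerivAt_heavyBallEnergy_comp (hΦ.differentiable one_ne_zero _) (hQ_symm _) (hx t ht),
      neg_nonpos.2 (heavyBallDissipation_nonneg hD_pos _)⟩,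
    tendsto_infDist_heavyBallEquilibria hΦ hQ hD hQ_symm hQ_inj hD_pos hlevel hx⟩

end Convergence

end HeavyBall

/-- Heavy-ball dynamics `u̇ = Q(u)z`, `ż = -D(u)z - Q(u)∇Φ̃(u)`: the energy
`V(u,z) = Φ̃(u) + ½‖z‖²` decays with `V̇ = -⟨D(u)z, z⟩ ≤ 0` and trajectories
converge to `{(u,z) : z = 0 ∧ ∇Φ̃(u) = 0}`. -/
theorem stmt9 {p : ℕ}
    (Φ : EuclideanSpace ℝ (Fin p) → ℝ)
    (hΦ : ContDiff ℝ 1 Φ)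
    (hgrad_lip : LocallyLipschitz (gradient Φ))
    (hlevel : ∀ c : ℝ, IsCompact {w : EuclideanSpace ℝ (Fin p) | Φ w ≤ c})
    (Q D : EuclideanSpace ℝ (Fin p) → EuclideanSpace ℝ (Fin p) →L[ℝ] EuclideanSpace ℝ (Fin p))
    (hQ_lip : LocallyLipschitz Q) (hD_lip : LocallyLipschitz D)
    (hQ_symm : ∀ u v w, ⟪Q u v, w⟫ = ⟪v, Q u w⟫)
    (hQ_pos : ∀ u v, v ≠ 0 → 0 < ⟪Q u v, v⟫)
    (hD_symm : ∀ u v w, ⟪D u v, w⟫ = ⟪v, D u w⟫)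
    (hD_pos : ∀ u v, v ≠ 0 → 0 < ⟪D u v, v⟫)
    -- a complete solution of the heavy-ball dynamics
    (u z : ℝ → EuclideanSpace ℝ (Fin p))
    (hsolu : ∀ t ≥ (0 : ℝ), HasDerivAt u (Q (u t) (z t)) t)
    (hsolz : ∀ t ≥ (0 : ℝ), HasDerivAt z (-(D (u t) (z t)) - Q (u t) (gradient Φ (u t))) t) :
    (∀ t ≥ (0 : ℝ),
      HasDerivAt (fun s => Φ (u s) + (1 / 2) * ‖z s‖ ^ 2) (-⟪D (u t) (z t), z t⟫) t ∧
      -⟪D (u t) (z t), z t⟫ ≤ 0) ∧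
    Tendsto (fun t => Metric.infDist (u t, z t)
      {q : EuclideanSpace ℝ (Fin p) × EuclideanSpace ℝ (Fin p) |
        q.2 = 0 ∧ gradient Φ q.1 = 0})
      atTop (nhds 0) :=
  stmt9_general (x := fun t => (u t, z t)) hΦ hQ_lip.continuous hD_lip.continuous hQ_symm
    (fun u => injective_of_inner_map_self_pos (hQ_pos u)) hD_pos (hlevel _)
    fun t ht => (hsolu t ht).prodMk (hsolz t ht)
end

section
/- Let f : ℝⁿ × ℝᵖ → ℝⁿ be continuously differentiable with differentiable ℓ₀-Lipschitz steady-state map h, and let W be a differentiable Lyapunov function with constants α, β, γ, ζ > 0 as above. Let g : ℝⁿ × ℝᵖ × ℝʳ → ℝᵖ and k : ℝⁿ × ℝᵖ × ℝʳ → ℝʳ be locally Lipschitz and satisfy: (i) ‖(g(x',u,z), k(x',u,z)) − (g(x,u,z), k(x,u,z))‖ ≤ L‖x' − x‖ for all x, x', u, z; (ii) the reduced vector field (g̃, k̃)(u,z) := (g(h(u),u,z), k(h(u),u,z)) is ℓ-Lipschitz; (iii) the reduced dynamics u̇ = g̃(u,z), ż = k̃(u,z) have a unique equilibrium (u*,z*)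 and there is a differentiable V : ℝᵖ × ℝʳ → ℝ and constants α', β', μ, κ > 0 with, writing e(u,z) := (u − u*, z − z*), α'‖e(u,z)‖² ≤ V(u,z) ≤ β'‖e(u,z)‖², ⟨∇V(u,z), (g̃(u,z), k̃(u,z))⟩ ≤ −μ‖e(u,z)‖², and ‖∇V(u,z)‖ ≤ κ‖e(u,z)‖. If 0 < ε < γ / (ζL(1 + κℓ/μ)), then every complete solution (x,u,z) of ẋ = f(x,u), u̇ = εg(x,u,z), ż = εk(x,u,z) converges to the point (h(u*), u*, z*). -/
open Filter Metric Real
open scoped RealInnerProductSpace Topology NNReal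

/-!
The weighted sum `U = W + c * V` is a Lyapunov function of the interconnection. With
`a = ‖x - h u‖` and `b = ‖(u, z) - (u*, z*)‖`, its derivative along a solution is at most the
quadratic form `-(γ - ε * ζ * L) * a ^ 2 + ε * (ζ * ℓ + c * κ * L) * a * b - c * ε * μ * b ^ 2`.
The choice `c = ζ * ℓ / (κ * L)` makes the two cross terms equal, and the form is then negative
definite exactly when `ε` is below the stated bound. Hence `U`, which is comparable to
`a ^ 2 + b ^ 2`, decays exponentially. The plant may be regarded as driven by the whole controller
state `(u, z)` instead of by `u` alone, so only two coupled subsystems have to be considered.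
-/

section ScalarEstimates

lemma exists_pos_mul_sq_add_sq_le {m q s : ℝ} (hm : 0 < m) (hs : s ^ 2 < m * q) :
    ∃ η > 0, ∀ a b : ℝ, η * (a ^ 2 + b ^ 2) ≤ m * a ^ 2 - 2 * s * a * b + q * b ^ 2 := by
  have hq : 0 < q := pos_of_mul_pos_right ((sq_nonneg s).trans_lt hs) hm.le
  refine ⟨(m * q - s ^ 2) / (m + q), div_pos (sub_pos.2 hs) (by positivity), fun a b ↦ ?_⟩
  rw [div_mul_eq_mul_div, div_le_iff₀ (by positivity)]
  have hsos : (m * a ^ 2 - 2 * s * a * b + q * b ^ 2) * (m + q)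
      = (m * q - s ^ 2) * (a ^ 2 + b ^ 2) + (m * a - s * b) ^ 2 + (s * a - q * b) ^ 2 := by ring
  rw [hsos]
  linarith [sq_nonneg (m * a - s * b), sq_nonneg (s * a - q * b)]

lemma exists_weight_neg_definite {γ ζ L ℓ μ κ ε : ℝ} (hζ : 0 < ζ) (hL : 0 < L) (hℓ : 0 < ℓ)
    (hμ : 0 < μ) (hκ : 0 < κ) (hε : 0 < ε) (hεbound : ε < γ / (ζ * L * (1 + κ * ℓ / μ))) :
    ∃ c > 0, ∃ η > 0, ∀ a b : ℝ,
      -γ * a ^ 2 + ζ * a * (ε * (L * a + ℓ * b)) + c * (ε * (-μ * b ^ 2 + κ * b * (L * a))) ≤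
        -η * (a ^ 2 + b ^ 2) := by
  have hgain : ε * ζ * L * κ * ℓ < (γ - ε * ζ * L) * μ := by
    rw [lt_div_iff₀ (by positivity)] at hεbound
    calc ε * ζ * L * κ * ℓ = ε * (ζ * L * (1 + κ * ℓ / μ)) * μ - ε * ζ * L * μ := by
          field_simp
          ring
      _ < γ * μ - ε * ζ * L * μ := by gcongr
      _ = (γ - ε * ζ * L) * μ := by ring
  have hm : 0 < γ - ε * ζ * L := pos_of_mul_pos_left (lt_trans (by positivity) hgain) hμ.le
  obtain ⟨c, hc, hcross⟩ : ∃ c > 0, c * (κ * L) = ζ * ℓ :=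
    ⟨ζ * ℓ / (κ * L), by positivity, div_mul_cancel₀ _ (by positivity)⟩
  have hdisc : (ε * ζ * ℓ) ^ 2 < (γ - ε * ζ * L) * (c * ε * μ) :=
    calc (ε * ζ * ℓ) ^ 2 = c * ε * (ε * ζ * L * κ * ℓ) := by
          linear_combination -(ε ^ 2 * ζ * ℓ) * hcross
      _ < c * ε * ((γ - ε * ζ * L) * μ) := by gcongr
      _ = (γ - ε * ζ * L) * (c * ε * μ) := by ring
  obtain ⟨η, hη, hform⟩ := exists_pos_mul_sq_add_sq_le hm hdisc
  refine ⟨c, hc, η, hη, fun a b ↦ ?_⟩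
  linear_combination hform a b + ε * a * b * hcross

lemma le_mul_exp_of_hasDerivAt_le {U U' : ℝ → ℝ} {K : ℝ}
    (hU : ∀ t ≥ 0, HasDerivAt U (U' t) t) (hU' : ∀ t ≥ 0, U' t ≤ K * U t) {t : ℝ} (ht : 0 ≤ t) :
    U t ≤ U 0 * exp (K * t) := by
  have hgronwall := le_gronwallBound_of_liminf_deriv_right_le (δ := U 0) (K := K) (ε := 0) (b := t)
    (fun s hs ↦ (hU s hs.1).continuousAt.continuousWithinAt)
    (fun s hs _ hr ↦ (hU s hs.1).hasDerivWithinAt.liminf_right_slope_le hr) le_rfl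
    (fun s hs ↦ by simpa only [add_zero] using hU' s hs.1) t ⟨ht, le_rfl⟩
  rwa [gronwallBound_ε0, sub_zero] at hgronwall

lemma tendsto_zero_of_hasDerivAt_le_neg_mul {U U' N : ℝ → ℝ} {A B η : ℝ} (hA : 0 < A)
    (hB : 0 < B) (hη : 0 < η) (hU : ∀ t ≥ 0, HasDerivAt U (U' t) t)
    (hU' : ∀ t ≥ 0, U' t ≤ -η * N t) (hN : ∀ t, 0 ≤ N t) (hlower : ∀ t, A * N t ≤ U t)
    (hupper : ∀ t, U t ≤ B * N t) : Tendsto N atTop (𝓝 0) := by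
  have hdecay : ∀ t ≥ 0, U' t ≤ -(η / B) * U t := fun t ht ↦
    calc U' t ≤ -(η / B) * (B * N t) := (hU' t ht).trans_eq (by field_simp)
      _ ≤ -(η / B) * U t :=
        mul_le_mul_of_nonpos_left (hupper t) (neg_nonpos.2 (div_pos hη hB).le)
  have hexp : Tendsto (fun t ↦ U 0 * exp (-(η / B) * t) / A) atTop (𝓝 0) := by
    have hlin : Tendsto (fun t ↦ -(η / B) * t) atTop atBot :=
      tendsto_id.const_mul_atTop_of_neg (neg_neg_of_pos (div_pos hη hB))
    simpa only [Function.comp_def, mul_zero, zero_div] using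
      ((tendsto_exp_atBot.comp hlin).const_mul (U 0)).div_const A
  refine squeeze_zero' (.of_forall hN) ?_ hexp
  filter_upwards [eventually_ge_atTop 0] with t ht
  rw [le_div_iff₀' hA]
  exact (hlower t).trans (le_mul_exp_of_hasDerivAt_le hU hdecay ht)

end ScalarEstimates

section Calculus

lemma tendsto_zero_of_norm_sq_le {ι E : Type*} [SeminormedAddCommGroup E] {l : Filter ι}
    {v : ι → E} {N : ι → ℝ} (hN : Tendsto N l (𝓝 0)) (hv : ∀ i, ‖v i‖ ^ 2 ≤ N i) :
    Tendsto v l (𝓝 0) := by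
  have hsqrt : Tendsto (fun i ↦ √(N i)) l (𝓝 0) := by simpa only [sqrt_zero] using hN.sqrt
  exact squeeze_zero_norm (fun i ↦ le_sqrt_of_sq_le (hv i)) hsqrt

lemma mul_add_mul_le_sqrt_mul_sqrt (a b c d : ℝ) :
    a * c + b * d ≤ √(a ^ 2 + b ^ 2) * √(c ^ 2 + d ^ 2) := by
  simpa [Fin.sum_univ_two] using Real.sum_mul_le_sqrt_mul_sqrt Finset.univ ![a, b] ![c, d]

lemma norm_gradient {𝕜 E : Type*} [RCLike 𝕜] [NormedAddCommGroup E] [InnerProductSpace 𝕜 E]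
    [CompleteSpace E] (φ : E → 𝕜) (x : E) : ‖gradient φ x‖ = ‖fderiv 𝕜 φ x‖ := by
  rw [← toDual_gradient, LinearIsometryEquiv.norm_map]

variable {𝕜 E F G : Type*} [NontriviallyNormedField 𝕜] [NormedAddCommGroup E] [NormedSpace 𝕜 E]
  [NormedAddCommGroup F] [NormedSpace 𝕜 F] [NormedAddCommGroup G] [NormedSpace 𝕜 G]

lemma fderiv_uncurry_apply {φ : E → F → G} {x : E} {y : F}
    (hφ : DifferentiableAt 𝕜 (Function.uncurry φ) (x, y)) (v : E × F) :
    fderiv 𝕜 (Function.uncurry φ) (x, y) v =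
      fderiv 𝕜 (fun x' ↦ φ x' y) x v.1 + fderiv 𝕜 (φ x) y v.2 := by
  have hleft := hφ.hasFDerivAt.comp x (hasFDerivAt_prodMk_left (𝕜 := 𝕜) x y)
  have hright := hφ.hasFDerivAt.comp y (hasFDerivAt_prodMk_right (𝕜 := 𝕜) x y)
  have hfderiv_left : fderiv 𝕜 (fun x' ↦ φ x' y) x = _ := hleft.fderiv
  have hfderiv_right : fderiv 𝕜 (φ x) y = _ := hright.fderiv
  rw [hfderiv_left, hfderiv_right, ContinuousLinearMap.comp_apply, ContinuousLinearMap.comp_apply,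
    ← map_add, ContinuousLinearMap.inl_apply, ContinuousLinearMap.inr_apply, Prod.mk_add_mk,
    add_zero, zero_add]

lemma hasDerivAt_comp_uncurry {φ : E → F → G} {x : 𝕜 → E} {y : 𝕜 → F} {x' : E} {y' : F} {t : 𝕜}
    (hφ : DifferentiableAt 𝕜 (Function.uncurry φ) (x t, y t)) (hx : HasDerivAt x x' t)
    (hy : HasDerivAt y y' t) :
    HasDerivAt (fun s ↦ φ (x s) (y s))
      (fderiv 𝕜 (fun a ↦ φ a (y t)) (x t) x' + fderiv 𝕜 (φ (x t)) (y t) y') t := by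
  rw [← fderiv_uncurry_apply hφ (x', y')]
  exact hφ.hasFDerivAt.comp_hasDerivAt t (hx.prodMk hy)

lemma hasDerivAt_toLp_prod (p : ENNReal) [Fact (1 ≤ p)] {x : 𝕜 → E} {y : 𝕜 → F} {x' : E}
    {y' : F} {t : 𝕜} (hx : HasDerivAt x x' t) (hy : HasDerivAt y y' t) :
    HasDerivAt (fun s ↦ WithLp.toLp p (x s, y s)) (WithLp.toLp p (x', y')) t :=
  (WithLp.prodContinuousLinearEquiv p 𝕜 E F).symm.hasFDerivAt.comp_hasDerivAt t (hx.prodMk hy)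

lemma norm_fstL_le_one (p : ENNReal) [Fact (1 ≤ p)] : ‖WithLp.fstL p 𝕜 E F‖ ≤ 1 :=
  ContinuousLinearMap.opNorm_le_bound _ zero_le_one fun v ↦
    (WithLp.norm_fst_le E v).trans_eq (one_mul ‖v‖).symm

lemma fderiv_withLp_apply {φ : E → F → G} (p : ENNReal) [Fact (1 ≤ p)] {q : WithLp p (E × F)}
    (hφ : DifferentiableAt 𝕜 (Function.uncurry φ) (q.fst, q.snd)) (v : WithLp p (E × F)) :
    fderiv 𝕜 (fun q : WithLp p (E × F) ↦ φ q.fst q.snd) q v =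
      fderiv 𝕜 (fun x ↦ φ x q.snd) q.fst v.fst + fderiv 𝕜 (φ q.fst) q.snd v.snd := by
  have hchain := hφ.hasFDerivAt.comp q (WithLp.prodContinuousLinearEquiv p 𝕜 E F).hasFDerivAt
  have hfderiv : fderiv 𝕜 (fun q : WithLp p (E × F) ↦ φ q.fst q.snd) q = _ := hchain.fderiv
  rw [hfderiv]
  exact fderiv_uncurry_apply hφ (v.fst, v.snd)

lemma norm_fderiv_withLp_le {φ : E → F → G} {q : WithLp 2 (E × F)}
    (hφ : DifferentiableAt 𝕜 (Function.uncurry φ) (q.fst, q.snd)) :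
    ‖fderiv 𝕜 (fun q : WithLp 2 (E × F) ↦ φ q.fst q.snd) q‖ ≤
      √(‖fderiv 𝕜 (fun x ↦ φ x q.snd) q.fst‖ ^ 2 + ‖fderiv 𝕜 (φ q.fst) q.snd‖ ^ 2) := by
  refine ContinuousLinearMap.opNorm_le_bound _ (sqrt_nonneg _) fun v ↦ ?_
  rw [fderiv_withLp_apply 2 hφ, WithLp.prod_norm_eq_of_L2]
  calc ‖fderiv 𝕜 (fun x ↦ φ x q.snd) q.fst v.fst + fderiv 𝕜 (φ q.fst) q.snd v.snd‖
      ≤ ‖fderiv 𝕜 (fun x ↦ φ x q.snd) q.fst‖ * ‖v.fst‖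
          + ‖fderiv 𝕜 (φ q.fst) q.snd‖ * ‖v.snd‖ :=
        norm_add_le_of_le (ContinuousLinearMap.le_opNorm _ _) (ContinuousLinearMap.le_opNorm _ _)
    _ ≤ _ := mul_add_mul_le_sqrt_mul_sqrt _ _ _ _

end Calculus

section Lyapunov

variable {X P Q : Type*} [NormedAddCommGroup X] [NormedSpace ℝ X] [NormedAddCommGroup P]
  [NormedSpace ℝ P] [NormedAddCommGroup Q] [NormedSpace ℝ Q] {α β γ ζ α' β' μ κ : ℝ}

/-- A Lyapunov function for the plant `ẋ = f(x, p)` with constant parameter `p` and steady states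
`h p`, with constants `α, β, γ, ζ`. Fréchet derivatives replace gradients, so that no inner product
is needed. -/
structure IsPlantLyapunov_s11 (f : X → P → X) (h : P → X) (W : X → P → ℝ) (α β γ ζ : ℝ) : Prop where
  differentiable : Differentiable ℝ (Function.uncurry W)
  lower : ∀ x p, α * ‖x - h p‖ ^ 2 ≤ W x p
  upper : ∀ x p, W x p ≤ β * ‖x - h p‖ ^ 2
  decay : ∀ x p, fderiv ℝ (fun y ↦ W y p) x (f x p) ≤ -γ * ‖x - h p‖ ^ 2
  norm_fderiv_le : ∀ x p, ‖fderiv ℝ (W x) p‖ ≤ ζ * ‖x - h p‖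

/-- A Lyapunov function for the equilibrium `q₀` of the autonomous system `q̇ = F(q)`, with
quadratic bounds; the reduced controller dynamics are required to have one. -/
structure IsQuadraticLyapunovAt (F : Q → Q) (q₀ : Q) (V : Q → ℝ) (α β μ κ : ℝ) : Prop where
  differentiable : Differentiable ℝ V
  lower : ∀ q, α * ‖q - q₀‖ ^ 2 ≤ V q
  upper : ∀ q, V q ≤ β * ‖q - q₀‖ ^ 2
  decay : ∀ q, fderiv ℝ V q (F q) ≤ -μ * ‖q - q₀‖ ^ 2
  norm_fderiv_le : ∀ q, ‖fderiv ℝ V q‖ ≤ κ * ‖q - q₀‖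

lemma IsPlantLyapunov_s11.fderiv_add_fderiv_le {f : X → P → X} {h : P → X} {W : X → P → ℝ}
    (hW : IsPlantLyapunov_s11 f h W α β γ ζ) (x : X) (p p' : P) :
    fderiv ℝ (fun y ↦ W y p) x (f x p) + fderiv ℝ (W x) p p' ≤
      -γ * ‖x - h p‖ ^ 2 + ζ * ‖x - h p‖ * ‖p'‖ :=
  add_le_add (hW.decay x p) <| (le_abs_self _).trans <|
    (fderiv ℝ (W x) p).le_of_opNorm_le (hW.norm_fderiv_le x p) p'

lemma IsPlantLyapunov_s11.comp_continuousLinearMap {f : X → P → X} {h : P → X} {W : X → P → ℝ}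
    (hW : IsPlantLyapunov_s11 f h W α β γ ζ) {A : Q →L[ℝ] P} (hA : ‖A‖ ≤ 1) :
    IsPlantLyapunov_s11 (fun x q ↦ f x (A q)) (fun q ↦ h (A q)) (fun x q ↦ W x (A q)) α β γ ζ where
  differentiable :=
    hW.differentiable.comp (differentiable_fst.prodMk (A.differentiable.comp differentiable_snd))
  lower x q := hW.lower x (A q)
  upper x q := hW.upper x (A q)
  decay x q := hW.decay x (A q)
  norm_fderiv_le x q := by
    have hWx : DifferentiableAt ℝ (W x) (A q) :=
      (hW.differentiable (x, A q)).comp (A q)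
        ((differentiableAt_const x).prodMk differentiableAt_id)
    have hchain : fderiv ℝ (fun q ↦ W x (A q)) q = (fderiv ℝ (W x) (A q)).comp A :=
      (hWx.hasFDerivAt.comp q A.hasFDerivAt).fderiv
    rw [hchain]
    exact ((fderiv ℝ (W x) (A q)).opNorm_comp_le A).trans <|
      (mul_le_of_le_one_right (norm_nonneg _) hA).trans (hW.norm_fderiv_le x (A q))

lemma IsQuadraticLyapunovAt.fderiv_le {F : Q → Q} {q₀ : Q} {V : Q → ℝ}
    (hV : IsQuadraticLyapunovAt F q₀ V α β μ κ) (q v : Q) :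
    fderiv ℝ V q v ≤ -μ * ‖q - q₀‖ ^ 2 + κ * ‖q - q₀‖ * ‖v - F q‖ :=
  calc fderiv ℝ V q v = fderiv ℝ V q (F q) + fderiv ℝ V q (v - F q) := by
        rw [← map_add, add_sub_cancel]
    _ ≤ _ := add_le_add (hV.decay q) <| (le_abs_self _).trans <|
        (fderiv ℝ V q).le_of_opNorm_le (hV.norm_fderiv_le q) _

lemma isQuadraticLyapunovAt_withLp {F : WithLp 2 (P × Q) → WithLp 2 (P × Q)} {p₀ : P} {q₀ : Q}
    {V : P → Q → ℝ} (hV_diff : Differentiable ℝ (Function.uncurry V))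
    (hV_lb : ∀ p q, α * (‖p - p₀‖ ^ 2 + ‖q - q₀‖ ^ 2) ≤ V p q)
    (hV_ub : ∀ p q, V p q ≤ β * (‖p - p₀‖ ^ 2 + ‖q - q₀‖ ^ 2))
    (hV_decay : ∀ w, fderiv ℝ (fun p ↦ V p w.snd) w.fst (F w).fst
      + fderiv ℝ (V w.fst) w.snd (F w).snd ≤ -μ * (‖w.fst - p₀‖ ^ 2 + ‖w.snd - q₀‖ ^ 2))
    (hV_fderiv : ∀ p q, √(‖fderiv ℝ (fun p ↦ V p q) p‖ ^ 2 + ‖fderiv ℝ (V p) q‖ ^ 2) ≤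
      κ * √(‖p - p₀‖ ^ 2 + ‖q - q₀‖ ^ 2)) :
    IsQuadraticLyapunovAt F (WithLp.toLp 2 (p₀, q₀)) (fun w ↦ V w.fst w.snd) α β μ κ where
  differentiable :=
    hV_diff.comp (WithLp.prodContinuousLinearEquiv 2 ℝ P Q).differentiable
  lower w := by
    rw [WithLp.prod_norm_sq_eq_of_L2]
    exact hV_lb w.fst w.snd
  upper w := by
    rw [WithLp.prod_norm_sq_eq_of_L2]
    exact hV_ub w.fst w.snd
  decay w := by
    rw [fderiv_withLp_apply 2 (hV_diff _), WithLp.prod_norm_sq_eq_of_L2]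
    exact hV_decay w
  norm_fderiv_le w := by
    rw [WithLp.prod_norm_eq_of_L2 (w - _)]
    exact (norm_fderiv_withLp_le (hV_diff _)).trans (hV_fderiv w.fst w.snd)

lemma IsPlantLyapunov_s11.min_mul_le_composite {f : X → Q → X} {h : Q → X} {W : X → Q → ℝ}
    {F : Q → Q} {q₀ : Q} {V : Q → ℝ} {c : ℝ} (hW : IsPlantLyapunov_s11 f h W α β γ ζ)
    (hV : IsQuadraticLyapunovAt F q₀ V α' β' μ κ) (hc : 0 ≤ c) (x : X) (q : Q) :
    min α (c * α') * (‖x - h q‖ ^ 2 + ‖q - q₀‖ ^ 2) ≤ W x q + c * V q :=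
  calc min α (c * α') * (‖x - h q‖ ^ 2 + ‖q - q₀‖ ^ 2)
      ≤ α * ‖x - h q‖ ^ 2 + c * α' * ‖q - q₀‖ ^ 2 := by
        rw [mul_add]
        gcongr
        exacts [min_le_left _ _, min_le_right _ _]
    _ ≤ W x q + c * V q := by
        rw [mul_assoc]
        gcongr
        exacts [hW.lower x q, hV.lower q]

lemma IsPlantLyapunov_s11.composite_le_max_mul {f : X → Q → X} {h : Q → X} {W : X → Q → ℝ}
    {F : Q → Q} {q₀ : Q} {V : Q → ℝ} {c : ℝ} (hW : IsPlantLyapunov_s11 f h W α β γ ζ)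
    (hV : IsQuadraticLyapunovAt F q₀ V α' β' μ κ) (hc : 0 ≤ c) (x : X) (q : Q) :
    W x q + c * V q ≤ max β (c * β') * (‖x - h q‖ ^ 2 + ‖q - q₀‖ ^ 2) :=
  calc W x q + c * V q ≤ β * ‖x - h q‖ ^ 2 + c * β' * ‖q - q₀‖ ^ 2 := by
        rw [mul_assoc]
        gcongr
        exacts [hW.upper x q, hV.upper q]
    _ ≤ max β (c * β') * (‖x - h q‖ ^ 2 + ‖q - q₀‖ ^ 2) := by
        rw [mul_add]
        gcongr
        exacts [le_max_left _ _, le_max_right _ _]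

lemma IsPlantLyapunov_s11.exists_composite_deriv_le {f : X → Q → X} {h : Q → X} {W : X → Q → ℝ}
    {F : X → Q → Q} {q₀ : Q} {V : Q → ℝ} {L ℓ ε : ℝ} (hW : IsPlantLyapunov_s11 f h W α β γ ζ)
    (hV : IsQuadraticLyapunovAt (fun q ↦ F (h q) q) q₀ V α' β' μ κ)
    (hζ : 0 < ζ) (hμ : 0 < μ) (hκ : 0 < κ) (hL : 0 < L) (hℓ : 0 < ℓ)
    (hFx : ∀ x q, ‖F x q - F (h q) q‖ ≤ L * ‖x - h q‖)
    (hFh : ∀ q, ‖F (h q) q‖ ≤ ℓ * ‖q - q₀‖)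
    (hε : 0 < ε) (hεbound : ε < γ / (ζ * L * (1 + κ * ℓ / μ))) :
    ∃ c > 0, ∃ η > 0, ∀ x q,
      fderiv ℝ (fun y ↦ W y q) x (f x q) + fderiv ℝ (W x) q (ε • F x q)
        + c * fderiv ℝ V q (ε • F x q) ≤ -η * (‖x - h q‖ ^ 2 + ‖q - q₀‖ ^ 2) := by
  obtain ⟨c, hc, η, hη, hform⟩ := exists_weight_neg_definite hζ hL hℓ hμ hκ hε hεbound
  refine ⟨c, hc, η, hη, fun x q ↦ le_trans ?_ (hform ‖x - h q‖ ‖q - q₀‖)⟩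
  have hF : ‖F x q‖ ≤ L * ‖x - h q‖ + ℓ * ‖q - q₀‖ := by
    simpa only [sub_add_cancel] using norm_add_le_of_le (hFx x q) (hFh q)
  have hplant := hW.fderiv_add_fderiv_le x q (ε • F x q)
  rw [norm_smul, norm_of_nonneg hε.le] at hplant
  have hcontroller := hV.fderiv_le q (F x q)
  rw [map_smul (fderiv ℝ V q), smul_eq_mul]
  refine add_le_add (hplant.trans ?_) ?_
  · gcongr
  · gcongr
    exact hcontroller.trans <|
      (add_le_add_iff_left _).2 (mul_le_mul_of_nonneg_left (hFx x q) (by positivity))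

theorem IsPlantLyapunov_s11.tendsto_interconnection {f : X → Q → X} {h : Q → X} {W : X → Q → ℝ}
    {F : X → Q → Q} {q₀ : Q} {V : Q → ℝ} {L ℓ ε : ℝ} (hW : IsPlantLyapunov_s11 f h W α β γ ζ)
    (hV : IsQuadraticLyapunovAt (fun q ↦ F (h q) q) q₀ V α' β' μ κ)
    (hα : 0 < α) (hβ : 0 < β) (hζ : 0 < ζ) (hα' : 0 < α') (hμ : 0 < μ)
    (hκ : 0 < κ) (hL : 0 < L) (hℓ : 0 < ℓ) (hh : ContinuousAt h q₀)
    (hFx : ∀ x q, ‖F x q - F (h q) q‖ ≤ L * ‖x - h q‖)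
    (hFh : ∀ q, ‖F (h q) q‖ ≤ ℓ * ‖q - q₀‖)
    (hε : 0 < ε) (hεbound : ε < γ / (ζ * L * (1 + κ * ℓ / μ)))
    {x : ℝ → X} {q : ℝ → Q} (hx : ∀ t ≥ 0, HasDerivAt x (f (x t) (q t)) t)
    (hq : ∀ t ≥ 0, HasDerivAt q (ε • F (x t) (q t)) t) :
    Tendsto x atTop (𝓝 (h q₀)) ∧ Tendsto q atTop (𝓝 q₀) := by
  obtain ⟨c, hc, η, hη, hdecay⟩ :=
    hW.exists_composite_deriv_le hV hζ hμ hκ hL hℓ hFx hFh hε hεbound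
  have hderiv : ∀ t ≥ 0, HasDerivAt (fun t ↦ W (x t) (q t) + c * V (q t)) _ t := fun t ht ↦
    (hasDerivAt_comp_uncurry (hW.differentiable _) (hx t ht) (hq t ht)).add
      (((hV.differentiable _).hasFDerivAt.comp_hasDerivAt t (hq t ht)).const_mul c)
  have hN : Tendsto (fun t ↦ ‖x t - h (q t)‖ ^ 2 + ‖q t - q₀‖ ^ 2) atTop (𝓝 0) :=
    tendsto_zero_of_hasDerivAt_le_neg_mul (lt_min hα (mul_pos hc hα')) (lt_max_of_lt_left hβ) hη
      hderiv (fun t _ ↦ hdecay (x t) (q t)) (fun t ↦ by positivity)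
      (fun t ↦ hW.min_mul_le_composite hV hc.le (x t) (q t))
      (fun t ↦ hW.composite_le_max_mul hV hc.le (x t) (q t))
  have hq_lim : Tendsto q atTop (𝓝 q₀) :=
    tendsto_sub_nhds_zero_iff.1 <|
      tendsto_zero_of_norm_sq_le hN fun t ↦ le_add_of_nonneg_left (sq_nonneg _)
  have hx_sub : Tendsto (fun t ↦ x t - h (q t)) atTop (𝓝 0) :=
    tendsto_zero_of_norm_sq_le hN fun t ↦ le_add_of_nonneg_right (sq_nonneg _)
  exact ⟨by simpa using hx_sub.add (hh.tendsto.comp hq_lim), hq_lim⟩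

end Lyapunov

theorem stmt11_general {X U Z : Type*} [NormedAddCommGroup X] [NormedSpace ℝ X]
    [NormedAddCommGroup U] [NormedSpace ℝ U] [NormedAddCommGroup Z] [NormedSpace ℝ Z]
    {f : X → U → X} {h : U → X} {W : X → U → ℝ} {g : X → U → Z → U} {k : X → U → Z → Z}
    {V : U → Z → ℝ} {us : U} {zs : Z} {α β γ ζ L ℓ α' β' μ κ ε : ℝ}
    (hα : 0 < α) (hβ : 0 < β) (hζ : 0 < ζ) (hL : 0 < L) (hℓ : 0 < ℓ)
    (hα' : 0 < α') (hμ : 0 < μ) (hκ : 0 < κ)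
    (hh : ContinuousAt h us) (hW : IsPlantLyapunov_s11 f h W α β γ ζ)
    (hLbound : ∀ x u z,
      √(‖g x u z - g (h u) u z‖ ^ 2 + ‖k x u z - k (h u) u z‖ ^ 2) ≤ L * ‖x - h u‖)
    (hred : ∀ u z, √(‖g (h u) u z‖ ^ 2 + ‖k (h u) u z‖ ^ 2) ≤
      ℓ * √(‖u - us‖ ^ 2 + ‖z - zs‖ ^ 2))
    (hV_diff : Differentiable ℝ (Function.uncurry V))
    (hV_lb : ∀ u z, α' * (‖u - us‖ ^ 2 + ‖z - zs‖ ^ 2) ≤ V u z)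
    (hV_ub : ∀ u z, V u z ≤ β' * (‖u - us‖ ^ 2 + ‖z - zs‖ ^ 2))
    (hV_decay : ∀ u z, fderiv ℝ (fun v ↦ V v z) u (g (h u) u z) + fderiv ℝ (V u) z (k (h u) u z) ≤
      -μ * (‖u - us‖ ^ 2 + ‖z - zs‖ ^ 2))
    (hV_fderiv : ∀ u z, √(‖fderiv ℝ (fun v ↦ V v z) u‖ ^ 2 + ‖fderiv ℝ (V u) z‖ ^ 2) ≤
      κ * √(‖u - us‖ ^ 2 + ‖z - zs‖ ^ 2))
    (hε : 0 < ε) (hεbound : ε < γ / (ζ * L * (1 + κ * ℓ / μ)))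
    {x : ℝ → X} {u : ℝ → U} {z : ℝ → Z} (hsolx : ∀ t ≥ 0, HasDerivAt x (f (x t) (u t)) t)
    (hsolu : ∀ t ≥ 0, HasDerivAt u (ε • g (x t) (u t) (z t)) t)
    (hsolz : ∀ t ≥ 0, HasDerivAt z (ε • k (x t) (u t) (z t)) t) :
    Tendsto (fun t ↦ (x t, u t, z t)) atTop (𝓝 (h us, us, zs)) := by
  let F (x : X) (q : WithLp 2 (U × Z)) : WithLp 2 (U × Z) :=
    WithLp.toLp 2 (g x q.fst q.snd, k x q.fst q.snd)
  have hV := isQuadraticLyapunovAt_withLp (F := fun q ↦ F (h q.fst) q) hV_diff hV_lb hV_ub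
    (fun q ↦ hV_decay q.fst q.snd) hV_fderiv
  have hFx (x : X) (q) : ‖F x q - F (h q.fst) q‖ ≤ L * ‖x - h q.fst‖ := by
    rw [WithLp.prod_norm_eq_of_L2]
    exact hLbound x q.fst q.snd
  have hFh (q) : ‖F (h q.fst) q‖ ≤ ℓ * ‖q - WithLp.toLp 2 (us, zs)‖ := by
    rw [WithLp.prod_norm_eq_of_L2, WithLp.prod_norm_eq_of_L2]
    exact hred q.fst q.snd
  have hh' : ContinuousAt (fun q : WithLp 2 (U × Z) ↦ h q.fst) (WithLp.toLp 2 (us, zs)) :=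
    ContinuousAt.comp (f := WithLp.fst) hh (WithLp.fstL 2 ℝ U Z).continuous.continuousAt
  have hsolq : ∀ t ≥ 0, HasDerivAt (fun s ↦ WithLp.toLp 2 (u s, z s))
      (ε • F (x t) (WithLp.toLp 2 (u t, z t))) t := fun t ht ↦
    hasDerivAt_toLp_prod 2 (hsolu t ht) (hsolz t ht)
  have hW' : IsPlantLyapunov_s11 (fun x (q : WithLp 2 (U × Z)) ↦ f x q.fst) (fun q ↦ h q.fst)
      (fun x q ↦ W x q.fst) α β γ ζ :=
    hW.comp_continuousLinearMap (A := WithLp.fstL 2 ℝ U Z) (norm_fstL_le_one 2)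
  obtain ⟨hx_lim, hq_lim⟩ := hW'.tendsto_interconnection hV hα hβ hζ hα'
    hμ hκ hL hℓ hh' hFx hFh hε hεbound hsolx hsolq
  exact hx_lim.prodMk_nhds
    (((WithLp.prodContinuousLinearEquiv 2 ℝ U Z).continuous.tendsto _).comp hq_lim)

/-- General feedback optimization dynamics with internal controller state:
if the reduced controller dynamics admit a Lyapunov function with constants
`μ, κ` and `0 < ε < γ/(ζL(1 + κℓ/μ))`, then every complete solution of
`ẋ = f(x,u)`, `u̇ = εg(x,u,z)`, `ż = εk(x,u,z)` converges to `(h(u*),u*,z*)`. -/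
theorem stmt11 {n p r : ℕ}
    (f : EuclideanSpace ℝ (Fin n) → EuclideanSpace ℝ (Fin p) → EuclideanSpace ℝ (Fin n))
    (h : EuclideanSpace ℝ (Fin p) → EuclideanSpace ℝ (Fin n))
    (W : EuclideanSpace ℝ (Fin n) → EuclideanSpace ℝ (Fin p) → ℝ)
    (g : EuclideanSpace ℝ (Fin n) → EuclideanSpace ℝ (Fin p) → EuclideanSpace ℝ (Fin r) →
      EuclideanSpace ℝ (Fin p))
    (k : EuclideanSpace ℝ (Fin n) → EuclideanSpace ℝ (Fin p) → EuclideanSpace ℝ (Fin r) →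
      EuclideanSpace ℝ (Fin r))
    (V : EuclideanSpace ℝ (Fin p) → EuclideanSpace ℝ (Fin r) → ℝ)
    (us : EuclideanSpace ℝ (Fin p)) (zs : EuclideanSpace ℝ (Fin r))
    (ℓ₀ : ℝ≥0) (α β γ ζ L ℓ α' β' μ κ ε : ℝ)
    (hα : 0 < α) (hβ : 0 < β) (hγ : 0 < γ) (hζ : 0 < ζ) (hL : 0 < L) (hℓ : 0 < ℓ)
    (hα' : 0 < α') (hβ' : 0 < β') (hμ : 0 < μ) (hκ : 0 < κ)
    -- plant
    (hf_smooth : ContDiff ℝ 1 (Function.uncurry f))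
    (hh_diff : Differentiable ℝ h)
    (hh_lip : LipschitzWith ℓ₀ h)
    (hsteady : ∀ u, f (h u) u = 0)
    -- Lyapunov function for the plant
    (hW_diff : Differentiable ℝ (Function.uncurry W))
    (hW_lb : ∀ x u, α * ‖x - h u‖ ^ 2 ≤ W x u)
    (hW_ub : ∀ x u, W x u ≤ β * ‖x - h u‖ ^ 2)
    (hW_decay : ∀ x u, ⟪gradient (fun y => W y u) x, f x u⟫ ≤ -γ * ‖x - h u‖ ^ 2)
    (hW_gradu : ∀ x u, ‖gradient (fun v => W x v) u‖ ≤ ζ * ‖x - h u‖)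
    -- controller vector fields
    (hg_lip : LocallyLipschitz (fun q : EuclideanSpace ℝ (Fin n) ×
      EuclideanSpace ℝ (Fin p) × EuclideanSpace ℝ (Fin r) => g q.1 q.2.1 q.2.2))
    (hk_lip : LocallyLipschitz (fun q : EuclideanSpace ℝ (Fin n) ×
      EuclideanSpace ℝ (Fin p) × EuclideanSpace ℝ (Fin r) => k q.1 q.2.1 q.2.2))
    -- (i) Lipschitz in x
    (hLbound : ∀ x x' u z,
      Real.sqrt (‖g x' u z - g x u z‖ ^ 2 + ‖k x' u z - k x u z‖ ^ 2) ≤ L * ‖x' - x‖)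
    -- (ii) the reduced vector field is ℓ-Lipschitz
    (hred_lip : ∀ u u' z z',
      Real.sqrt (‖g (h u') u' z' - g (h u) u z‖ ^ 2 + ‖k (h u') u' z' - k (h u) u z‖ ^ 2) ≤
        ℓ * Real.sqrt (‖u' - u‖ ^ 2 + ‖z' - z‖ ^ 2))
    -- (iii) unique equilibrium of the reduced dynamics with Lyapunov function V
    (heq : g (h us) us zs = 0 ∧ k (h us) us zs = 0)
    (huniq : ∀ u z, g (h u) u z = 0 → k (h u) u z = 0 → u = us ∧ z = zs)
    (hV_diff : Differentiable ℝ (Function.uncurry V))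
    (hV_lb : ∀ u z, α' * (‖u - us‖ ^ 2 + ‖z - zs‖ ^ 2) ≤ V u z)
    (hV_ub : ∀ u z, V u z ≤ β' * (‖u - us‖ ^ 2 + ‖z - zs‖ ^ 2))
    (hV_decay : ∀ u z,
      ⟪gradient (fun v => V v z) u, g (h u) u z⟫ + ⟪gradient (fun w => V u w) z, k (h u) u z⟫ ≤
        -μ * (‖u - us‖ ^ 2 + ‖z - zs‖ ^ 2))
    (hV_grad : ∀ u z,
      Real.sqrt (‖gradient (fun v => V v z) u‖ ^ 2 + ‖gradient (fun w => V u w) z‖ ^ 2) ≤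
        κ * Real.sqrt (‖u - us‖ ^ 2 + ‖z - zs‖ ^ 2))
    -- gain condition
    (hε : 0 < ε) (hεbound : ε < γ / (ζ * L * (1 + κ * ℓ / μ)))
    -- a complete solution of the interconnection
    (x : ℝ → EuclideanSpace ℝ (Fin n)) (u : ℝ → EuclideanSpace ℝ (Fin p))
    (z : ℝ → EuclideanSpace ℝ (Fin r))
    (hsolx : ∀ t ≥ (0 : ℝ), HasDerivAt x (f (x t) (u t)) t)
    (hsolu : ∀ t ≥ (0 : ℝ), HasDerivAt u (ε • g (x t) (u t) (z t)) t)
    (hsolz : ∀ t ≥ (0 : ℝ), HasDerivAt z (ε • k (x t) (u t) (z t)) t) :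
    Tendsto (fun t => (x t, u t, z t)) atTop
      (nhds ((h us, us, zs) : EuclideanSpace ℝ (Fin n) ×
        EuclideanSpace ℝ (Fin p) × EuclideanSpace ℝ (Fin r))) := by
  simp only [inner_gradient_left, norm_gradient] at hW_decay hW_gradu hV_decay hV_grad
  exact stmt11_general hα hβ hζ hL hℓ hα' hμ hκ hh_lip.continuous.continuousAt
    ⟨hW_diff, hW_lb, hW_ub, hW_decay, hW_gradu⟩ (fun x u z ↦ hLbound (h u) x u z)
    (fun u z ↦ by simpa only [heq.1, heq.2, sub_zero] using hred_lip us u zs z)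
    hV_diff hV_lb hV_ub hV_decay hV_grad hε hεbound hsolx hsolu hsolz
end

section
/- Let α₁, α₂, β₁, β₂ > 0 and ξ ∈ ℝ satisfy α₁α₂ > α₁ξ + β₁β₂, and set δ = β₁/(β₁ + β₂) (so δ ∈ (0,1)). Then the symmetric 2×2 real matrix Λ with entries Λ₁₁ = −(1−δ)α₁, Λ₂₂ = −δ(α₂ − ξ), and Λ₁₂ = Λ₂₁ = ((1−δ)β₁ + δβ₂)/2 is negative definite. -/
open Matrix

/-! The choice `δ = β₁ / (β₁ + β₂)` balances the cross terms, `(1 - δ) β₁ = δ β₂`. The off-diagonal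
entry, their average, then equals both of them, so its square is their product `δ (1 - δ) β₁ β₂` and
the determinant of `Λ` is `δ (1 - δ) (α₁ α₂ - (α₁ ξ + β₁ β₂))`, which is positive. Completing the
square turns this and the negativity of the upper left entry into negative definiteness. -/

section BinaryQuadraticForm

variable {R : Type*} [CommRing R]

theorem mul_dotProduct_mulVec_fin_two_eq_sq_add_det_mul_sq (a b c : R) (v : Fin 2 → R) :
    a * (v ⬝ᵥ (!![a, b; b, c] *ᵥ v)) =
      (a * v 0 + b * v 1) ^ 2 + !![a, b; b, c].det * v 1 ^ 2 := by
  simp only [mulVec, vec2_dotProduct, det_fin_two_of, of_apply, cons_val_zero, cons_val_one]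
  ring

variable [LinearOrder R] [IsStrictOrderedRing R]

theorem dotProduct_mulVec_fin_two_neg_of_det_pos {a b c : R} (ha : a < 0)
    (hdet : 0 < !![a, b; b, c].det) {v : Fin 2 → R} (hv : v ≠ 0) :
    v ⬝ᵥ (!![a, b; b, c] *ᵥ v) < 0 := by
  suffices h : 0 < a * (v ⬝ᵥ (!![a, b; b, c] *ᵥ v)) from neg_of_mul_pos_right h ha.le
  rw [mul_dotProduct_mulVec_fin_two_eq_sq_add_det_mul_sq]
  by_cases hv₁ : v 1 = 0
  · have hv₀ : v 0 ≠ 0 := fun hv₀ ↦ hv <| funext <| Fin.forall_fin_two.2 ⟨hv₀, hv₁⟩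
    simpa only [hv₁, mul_zero, add_zero, zero_pow two_ne_zero] using
      sq_pos_iff.2 (mul_ne_zero ha.ne hv₀)
  · exact add_pos_of_nonneg_of_pos (sq_nonneg _) (mul_pos hdet (sq_pos_iff.2 hv₁))

end BinaryQuadraticForm

theorem div_add_pos_of_mul_pos {K : Type*} [Field K] [LinearOrder K] [IsStrictOrderedRing K]
    {a b : K} (hab : 0 < a * b) : 0 < a / (a + b) := by
  rcases pos_and_pos_or_neg_and_neg_of_mul_pos hab with ⟨ha, hb⟩ | ⟨ha, hb⟩
  · exact div_pos ha (add_pos ha hb)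
  · exact div_pos_of_neg_of_neg ha (add_neg ha hb)

section LaSalleMatrix

variable {K : Type*} [Field K]

/-- The symmetric matrix `Λ` of the quadratic form in the LaSalle argument, with the weights
`1 - δ` and `δ` on the two coordinates. -/
def laSalleMatrix (α₁ α₂ β₁ β₂ ξ δ : K) : Matrix (Fin 2) (Fin 2) K :=
  !![-(1 - δ) * α₁, ((1 - δ) * β₁ + δ * β₂) / 2;
    ((1 - δ) * β₁ + δ * β₂) / 2, -(δ * (α₂ - ξ))]

theorem det_laSalleMatrix_of_balanced [NeZero (2 : K)] (α₁ α₂ ξ : K) {β₁ β₂ δ : K}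
    (hbal : (1 - δ) * β₁ = δ * β₂) :
    (laSalleMatrix α₁ α₂ β₁ β₂ ξ δ).det = δ * (1 - δ) * (α₁ * α₂ - (α₁ * ξ + β₁ * β₂)) := by
  have hoff : ((1 - δ) * β₁ + δ * β₂) / 2 = δ * β₂ := by rw [hbal, add_self_div_two]
  rw [laSalleMatrix, det_fin_two_of, hoff]
  linear_combination δ * β₂ * hbal

variable [LinearOrder K] [IsStrictOrderedRing K]

theorem dotProduct_laSalleMatrix_mulVec_neg_of_balanced {α₁ α₂ β₁ β₂ ξ δ : K} (hα₁ : 0 < α₁)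
    (hgap : α₁ * ξ + β₁ * β₂ < α₁ * α₂) (hδ₀ : 0 < δ) (hδ₁ : δ < 1)
    (hbal : (1 - δ) * β₁ = δ * β₂) {v : Fin 2 → K} (hv : v ≠ 0) :
    v ⬝ᵥ (laSalleMatrix α₁ α₂ β₁ β₂ ξ δ *ᵥ v) < 0 := by
  have hδ' : 0 < 1 - δ := sub_pos.2 hδ₁
  have hdet : 0 < (laSalleMatrix α₁ α₂ β₁ β₂ ξ δ).det := by
    rw [det_laSalleMatrix_of_balanced α₁ α₂ ξ hbal]
    exact mul_pos (mul_pos hδ₀ hδ') (sub_pos.2 hgap)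
  exact dotProduct_mulVec_fin_two_neg_of_det_pos
    (mul_neg_of_neg_of_pos (neg_neg_of_pos hδ') hα₁) hdet hv

theorem stmt12_general {α₁ α₂ β₁ β₂ ξ δ : K} (hα₁ : 0 < α₁) (hβ : 0 < β₁ * β₂)
    (hgap : α₁ * ξ + β₁ * β₂ < α₁ * α₂) (hδ : δ = β₁ / (β₁ + β₂)) {v : Fin 2 → K} (hv : v ≠ 0) :
    v ⬝ᵥ (laSalleMatrix α₁ α₂ β₁ β₂ ξ δ *ᵥ v) < 0 := by
  have hδ₀ : 0 < δ := hδ ▸ div_add_pos_of_mul_pos hβ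
  have hsum : β₁ + β₂ ≠ 0 := fun h ↦ hδ₀.ne' (by rw [hδ, h, div_zero])
  have hcompl : 1 - δ = β₂ / (β₁ + β₂) := by rw [hδ, one_sub_div hsum, add_sub_cancel_left]
  have hδ₁ : δ < 1 := by
    rw [← sub_pos, hcompl, add_comm β₁]
    exact div_add_pos_of_mul_pos (mul_comm β₁ β₂ ▸ hβ)
  have hbal : (1 - δ) * β₁ = δ * β₂ := by rw [hcompl, hδ]; ring
  exact dotProduct_laSalleMatrix_mulVec_neg_of_balanced hα₁ hgap hδ₀ hδ₁ hbal hv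

end LaSalleMatrix

/-- The 2×2 LaSalle matrix `Λ` is negative definite when
`α₁α₂ > α₁ξ + β₁β₂` and `δ = β₁/(β₁+β₂)`. -/
theorem stmt12 (α₁ α₂ β₁ β₂ ξ δ : ℝ)
    (hα₁ : 0 < α₁) (hα₂ : 0 < α₂) (hβ₁ : 0 < β₁) (hβ₂ : 0 < β₂)
    (hgap : α₁ * ξ + β₁ * β₂ < α₁ * α₂)
    (hδ : δ = β₁ / (β₁ + β₂)) :
    ∀ v : Fin 2 → ℝ, v ≠ 0 →
      v ⬝ᵥ (!![-(1 - δ) * α₁, ((1 - δ) * β₁ + δ * β₂) / 2;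
              ((1 - δ) * β₁ + δ * β₂) / 2, -(δ * (α₂ - ξ))] *ᵥ v) < 0 :=
  fun _ hv ↦ stmt12_general hα₁ (mul_pos hβ₁ hβ₂) hgap hδ hv
end

section
/- Let h : ℝᵖ → ℝⁿ be ℓ-Lipschitz, let W : ℝⁿ × ℝᵖ → ℝ be continuous with W(x,u) ≥ α‖x − h(u)‖² for some α > 0 and all (x,u) (in particular W ≥ 0), and let V : ℝᵖ → ℝ be continuous with compact sublevel sets. Then the function Z : ℝⁿ × ℝᵖ → ℝ defined by Z(x,u) := V(u) + W(x,u) has compact sublevel sets, i.e. {(x,u) : Z(x,u) ≤ c} is compact for every c ∈ ℝ. -/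
/-!
On a sublevel set of `Z(x, u) = V(u) + W(x, u)`, the point `u` stays in a compact sublevel set `K`
of `V` because `W` is bounded below, and then `W(x, u)` stays bounded because `V` is bounded below
on `K`. Since `W` grows with the distance from `x` to `h(u)`, the point `x` stays within a fixed
distance of the bounded set `h(K)`. So the sublevel set, which is closed, lies in a compact product.
-/

open Bornology Filter Function Metric Set

/-- A function is inf-compact if all its sublevel sets are compact. Unlike coercivity
(`Tendsto f (cocompact X) atTop`), this includes closedness of the sublevel sets. -/
def InfCompact {X β : Type*} [TopologicalSpace X] [LE β] (f : X → β) : Prop :=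
  ∀ c, IsCompact {x | f x ≤ c}

/-- A function of `(x, u)` is K-inf-compact if its sublevel sets become compact once `u` is
restricted to a compact set; this is the uniform version, along compact sets of parameters `u`,
of inf-compactness in `x`. The parameter is the second component of the pair. -/
def KInfCompact {X U β : Type*} [TopologicalSpace X] [TopologicalSpace U] [LE β]
    (f : X × U → β) : Prop :=
  ∀ ⦃K : Set U⦄, IsCompact K → ∀ c, IsCompact {q | q.2 ∈ K ∧ f q ≤ c}

theorem InfCompact.lowerSemicontinuous {X β : Type*} [TopologicalSpace X] [T2Space X]
    [LinearOrder β] {f : X → β} (hf : InfCompact f) : LowerSemicontinuous f :=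
  lowerSemicontinuous_iff_isClosed_preimage.2 fun c => (hf c).isClosed

theorem InfCompact.add_kInfCompact {X U : Type*} [TopologicalSpace X] [TopologicalSpace U]
    {V : U → ℝ} {W : X × U → ℝ} (hV : InfCompact V) (hV_lsc : LowerSemicontinuous V)
    (hW : KInfCompact W) (hW_lsc : LowerSemicontinuous W) (hW_bdd : BddBelow (range W)) :
    InfCompact fun q : X × U => V q.2 + W q := by
  intro c
  obtain ⟨b, hb⟩ := hW_bdd
  have hK : IsCompact {u | V u ≤ c - b} := hV (c - b)
  obtain ⟨m, hm⟩ := (hV_lsc.lowerSemicontinuousOn _).bddBelow_of_isCompact hK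
  have hZ_closed : IsClosed {q : X × U | V q.2 + W q ≤ c} :=
    ((hV_lsc.comp continuous_snd).add hW_lsc).isClosed_preimage c
  refine (hW hK (c - m)).of_isClosed_subset hZ_closed fun q (hq : V q.2 + W q ≤ c) => ?_
  have hVq : V q.2 ≤ c - b := by linarith [hb (mem_range_self q)]
  have hWq : W q ≤ c - m := by linarith [hm (mem_image_of_mem V hVq)]
  exact ⟨hVq, hWq⟩

theorem kInfCompact_of_comp_dist_le {X U β : Type*} [PseudoMetricSpace X] [ProperSpace X]
    [TopologicalSpace U] [LinearOrder β] [NoMaxOrder β] {h : U → X} {W : X × U → β} {φ : ℝ → β}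
    (hh : ∀ K, IsCompact K → IsBounded (h '' K)) (hφ : Tendsto φ atTop atTop)
    (hW_lsc : LowerSemicontinuous W) (hW : ∀ x u, φ (dist x (h u)) ≤ W (x, u)) :
    KInfCompact W := by
  intro K hK c
  obtain ⟨R, hR⟩ := eventually_atTop.1 (hφ.eventually_gt_atTop c)
  have hK_thick : IsCompact (cthickening R (h '' K)) :=
    isCompact_of_isClosed_isBounded isClosed_cthickening (hh K hK).cthickening
  have h_dist {x : X} {u : U} (hxu : W (x, u) ≤ c) : dist x (h u) ≤ R :=
    le_of_not_ge fun hRx => (hR _ hRx).not_ge ((hW x u).trans hxu)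
  have h_eq : {q : X × U | q.2 ∈ K ∧ W q ≤ c} = cthickening R (h '' K) ×ˢ K ∩ W ⁻¹' Iic c := by
    ext ⟨x, u⟩
    constructor
    · rintro ⟨hu, hxu⟩
      exact ⟨⟨mem_cthickening_of_dist_le x _ R _ (mem_image_of_mem h hu) (h_dist hxu), hu⟩, hxu⟩
    · rintro ⟨⟨-, hu⟩, hxu⟩
      exact ⟨hu, hxu⟩
  rw [h_eq]
  exact (hK_thick.prod hK).inter_right (hW_lsc.isClosed_preimage c)

theorem stmt13_general {X U : Type*} [PseudoMetricSpace X] [ProperSpace X] [TopologicalSpace U]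
    [T2Space U] {h : U → X} {W : X → U → ℝ} {V : U → ℝ} {α : ℝ} (hα : 0 < α)
    (hh : ∀ K, IsCompact K → IsBounded (h '' K)) (hW_lsc : LowerSemicontinuous (uncurry W))
    (hW : ∀ x u, α * dist x (h u) ^ 2 ≤ W x u) (hV : InfCompact V) :
    InfCompact fun q : X × U => V q.2 + W q.1 q.2 := by
  have hα_tendsto : Tendsto (fun t : ℝ => α * t ^ 2) atTop atTop :=
    (tendsto_pow_atTop two_ne_zero).const_mul_atTop hα
  have hW_nonneg (x : X) (u : U) : 0 ≤ W x u := le_trans (by positivity) (hW x u)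
  have hW_bdd : BddBelow (range (uncurry W)) :=
    ⟨0, forall_mem_range.2 fun q => hW_nonneg q.1 q.2⟩
  have hW_compact : KInfCompact (uncurry W) := kInfCompact_of_comp_dist_le hh hα_tendsto hW_lsc hW
  exact hV.add_kInfCompact hV.lowerSemicontinuous hW_compact hW_lsc hW_bdd

/-- If `V` has compact sublevel sets and `W ≥ α‖x - h(u)‖²` with `h` Lipschitz,
then `Z(x,u) = V(u) + W(x,u)` has compact sublevel sets. -/
theorem stmt13 {n p : ℕ}
    (h : EuclideanSpace ℝ (Fin p) → EuclideanSpace ℝ (Fin n))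
    (W : EuclideanSpace ℝ (Fin n) → EuclideanSpace ℝ (Fin p) → ℝ)
    (V : EuclideanSpace ℝ (Fin p) → ℝ)
    (ℓ : NNReal) (α : ℝ) (hα : 0 < α)
    (hh_lip : LipschitzWith ℓ h)
    (hW_cont : Continuous (Function.uncurry W))
    (hW_lb : ∀ x u, α * ‖x - h u‖ ^ 2 ≤ W x u)
    (hV_cont : Continuous V)
    (hV_level : ∀ c : ℝ, IsCompact {u : EuclideanSpace ℝ (Fin p) | V u ≤ c}) :
    ∀ c : ℝ, IsCompact {q : EuclideanSpace ℝ (Fin n) × EuclideanSpace ℝ (Fin p) |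
      V q.2 + W q.1 q.2 ≤ c} :=
  stmt13_general hα (fun _ hK => (hK.image hh_lip.continuous).isBounded)
    hW_cont.lowerSemicontinuous (by simpa only [dist_eq_norm] using hW_lb) hV_level
end
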